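/- If G is a simple graph with treewidth at most 6, then τ(G) ≤ 2·ν(G). -/

import Mathlib

open SimpleGraph

variable {V : Type*}

/-- A triangle transversal of `G`: a set of edges of `G` meeting every triangle of `G`
(so that its removal leaves a triangle-free graph). -/
def IsTriangleTransversal (G : SimpleGraph V) (X : Finset (Sym2 V)) : Prop :=
  ↑X ⊆ G.edgeSet ∧
    ∀ t : Finset V, G.IsNClique 3 t → ∃ e ∈ X, ∀ v ∈ e, v ∈ t

/-- A triangle packing of `G`: a set of pairwise edge-disjoint triangles of `G`. -/
def IsTrianglePacking (G : SimpleGraph V) (Y : Finset (Finset V)) : Prop :=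
  (∀ t ∈ Y, G.IsNClique 3 t) ∧
    ∀ s ∈ Y, ∀ t ∈ Y, s ≠ t →
      ∀ e ∈ G.edgeSet, ¬ ((∀ v ∈ e, v ∈ s) ∧ (∀ v ∈ e, v ∈ t))

/-- `tau G` is the minimum size of a triangle transversal of `G`. -/
noncomputable def tau (G : SimpleGraph V) : ℕ :=
  sInf {n | ∃ X : Finset (Sym2 V), IsTriangleTransversal G X ∧ X.card = n}

/-- `nu G` is the maximum size of a triangle packing of `G`. -/
noncomputable def nu (G : SimpleGraph V) : ℕ :=
  sSup {n | ∃ Y : Finset (Finset V), IsTrianglePacking G Y ∧ Y.card = n}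

/-- A tree decomposition of `G` with nodes indexed by `α`. -/
structure TreeDecomp (G : SimpleGraph V) (α : Type) where
  T : SimpleGraph α
  isTree : T.IsTree
  bag : α → Finset V
  covers : ∀ v : V, ∃ t : α, v ∈ bag t
  edge_mem : ∀ ⦃u w : V⦄, G.Adj u w → ∃ t : α, u ∈ bag t ∧ w ∈ bag t
  subtree : ∀ v : V, (T.induce {t : α | v ∈ bag t}).Connected

/-- `G` has a tree decomposition of width at most `k`. -/
def HasDecompOfWidthLE (G : SimpleGraph V) (k : ℕ) : Prop :=
  ∃ (α : Type) (D : TreeDecomp G α), ∀ t : α, (D.bag t).card ≤ k + 1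

/-- The treewidth of `G`. -/
noncomputable def treewidth (G : SimpleGraph V) : ℕ :=
  sInf {k | HasDecompOfWidthLE G k}

namespace Tuza

/-- `G` has a triangle transversal at most twice as large as some triangle packing. -/
def HasBound (G : SimpleGraph V) : Prop :=
  ∃ X Y, IsTriangleTransversal G X ∧ IsTrianglePacking G Y ∧ X.card ≤ 2 * Y.card

/-- An edge-minimal graph violating `HasBound`. -/
structure IsMinCounterexample (G : SimpleGraph V) : Prop where
  not_bound : ¬ HasBound G
  bound_of_lt : ∀ G' < G, HasBound G'

section Reduction

variable {G : SimpleGraph V}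

/-- The reduction step: if `S` meets every triangle containing an edge of `F`, the triangles of the
packing `T` only use edges of `S ∪ F`, and `S.card ≤ 2 * T.card`, then deleting `S ∪ F` would give
a smaller counterexample, unless nothing is deleted. -/
theorem IsMinCounterexample.notMem_of_reduction (hG : IsMinCounterexample G)
    {S : Finset (Sym2 V)} {T : Finset (Finset V)} {F : Set (Sym2 V)} (hS : ↑S ⊆ G.edgeSet)
    (hT : IsTrianglePacking G T)
    (hkill : ∀ t, G.IsNClique 3 t → ∀ e ∈ F, e ∈ G.edgeSet → (∀ v ∈ e, v ∈ t) →
      ∃ e ∈ S, ∀ v ∈ e, v ∈ t)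
    (hTS : ∀ t ∈ T, ∀ e ∈ G.edgeSet, (∀ v ∈ e, v ∈ t) → e ∈ S ∨ e ∈ F)
    (hcard : S.card ≤ 2 * T.card) {e : Sym2 V} (he : e ∈ G.edgeSet) : e ∉ S ∧ e ∉ F := by
  classical
  by_contra hne
  set D : Set (Sym2 V) := ↑S ∪ F with hD
  have hlt : G.deleteEdges D < G := by
    refine lt_of_le_of_ne (G.deleteEdges_le D) fun heq => ?_
    rw [← heq, edgeSet_deleteEdges] at he
    apply hne
    simpa [hD, not_or] using he.2
  obtain ⟨X, Y, hX, hY, hXY⟩ := hG.bound_of_lt _ hlt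
  have hedge : ∀ t, (G.deleteEdges D).IsNClique 3 t → ∀ e ∈ G.edgeSet, (∀ v ∈ e, v ∈ t) →
      e ∈ (G.deleteEdges D).edgeSet := by
    intro t ht e
    induction e with | _ u v
    intro he hv
    exact ht.isClique (hv u (by simp)) (hv v (by simp)) (G.ne_of_adj he)
  have hTY : ∀ s ∈ T, ∀ t ∈ Y, ∀ e ∈ G.edgeSet, (∀ v ∈ e, v ∈ s) → (∀ v ∈ e, v ∈ t) → False := by
    intro s hs t ht e he hes het
    have h1 := hedge t (hY.1 t ht) e he het
    rw [edgeSet_deleteEdges] at h1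
    exact h1.2 (hTS s hs e he hes)
  have hdisj : Disjoint T Y := by
    rw [Finset.disjoint_left]
    intro t ht ht'
    obtain ⟨a, b, c, hab, -, -, rfl⟩ := is3Clique_iff.1 (hT.1 t ht)
    exact hTY _ ht _ ht' s(a, b) hab (by simp) (by simp)
  refine hG.not_bound ⟨S ∪ X, T ∪ Y, ⟨?_, fun t ht => ?_⟩, ⟨fun t ht => ?_, ?_⟩, ?_⟩
  · rw [Finset.coe_union]
    exact Set.union_subset hS (hX.1.trans (edgeSet_mono hlt.le))
  · by_cases h : ∃ e ∈ D, e ∈ G.edgeSet ∧ ∀ v ∈ e, v ∈ t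
    · obtain ⟨e, heD, he, het⟩ := h
      rcases heD with heS | heF
      · exact ⟨e, Finset.mem_union_left _ heS, het⟩
      · obtain ⟨e', he', h'⟩ := hkill t ht e heF he het
        exact ⟨e', Finset.mem_union_left _ he', h'⟩
    · push Not at h
      have htc : (G.deleteEdges D).IsNClique 3 t := by
        refine ⟨fun u hu v hv huv => ?_, ht.card_eq⟩
        have hadj := ht.isClique hu hv huv
        rw [deleteEdges_adj]
        refine ⟨hadj, fun hmem => ?_⟩
        obtain ⟨w, hw, hwt⟩ := h _ hmem hadj
        rcases Sym2.mem_iff.1 hw with rfl | rfl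
        exacts [hwt hu, hwt hv]
      obtain ⟨e, he, het⟩ := hX.2 t htc
      exact ⟨e, Finset.mem_union_right _ he, het⟩
  · rcases Finset.mem_union.1 ht with h | h
    · exact hT.1 t h
    · exact (hY.1 t h).mono hlt.le
  · intro s hs t ht hst e he ⟨hes, het⟩
    rcases Finset.mem_union.1 hs with hs | hs <;> rcases Finset.mem_union.1 ht with ht | ht
    · exact hT.2 s hs t ht hst e he ⟨hes, het⟩
    · exact hTY s hs t ht e he hes het
    · exact hTY t ht s hs e he het hes
    · exact hY.2 s hs t ht hst e (hedge s (hY.1 s hs) e he hes) ⟨hes, het⟩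
  · rw [Finset.card_union_of_disjoint hdisj]
    have := Finset.card_union_le S X
    omega

theorem IsMinCounterexample.exists_common_neighbor (hG : IsMinCounterexample G) {u v : V}
    (huv : G.Adj u v) : ∃ w, G.Adj u w ∧ G.Adj v w := by
  classical
  by_contra! hno
  refine (hG.notMem_of_reduction (S := ∅) (T := ∅) (F := {s(u, v)}) (by simp)
    ⟨by simp, by simp⟩ ?_ (by simp) (by simp) (e := s(u, v)) huv).2 rfl
  rintro t ht e rfl - he
  obtain ⟨a, b, c, hab, hac, hbc, rfl⟩ := is3Clique_iff.1 ht
  have hu := he u (by simp)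
  have hv := he v (by simp)
  simp only [Finset.mem_insert, Finset.mem_singleton] at hu hv
  have := huv.ne
  rcases hu with rfl | rfl | rfl <;> rcases hv with rfl | rfl | rfl <;>
    first
    | exact absurd rfl this
    | (exfalso; first
        | exact hno _ hac hbc
        | exact hno _ hab hbc.symm
        | exact hno _ hbc hac
        | exact hno _ hab.symm hac.symm
        | exact hno _ hbc.symm hab
        | exact hno _ hac.symm hab.symm)

end Reduction

section Certificate

/-- The code of the pair of indices `i, j < 10`: its two decimal digits, in increasing order. -/
def edgeCode (i j : ℕ) : ℕ := bif i.blt j then 10 * i + j else 10 * j + i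

/-- The codes of the three pairs in the triangle whose vertices are the decimal digits of `t`. -/
def sides (t : ℕ) : List ℕ :=
  [10 * (t / 100) + t / 10 % 10, 10 * (t / 100) + t % 10, 10 * (t / 10 % 10) + t % 10]

/-- The number whose binary digits mark the members of a list. -/
def mask (l : List ℕ) : ℕ := l.foldr (fun c m => 1 <<< c ||| m) 0

/-- A case distinction showing that no minimal counterexample contains a given partially known
local configuration. A leaf `triv` uses an edge in no triangle or a forbidden link; a leaf
`wit W T E` is a reduction removing the vertices `W`, with packing `T` and a transversal made of
`E` and the sides of `T` avoiding `W`; `split c a p` distinguishes whether the pair `c` is a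
nonedge or an edge. -/
inductive Cert
  | triv
  | wit (W T E : List ℕ)
  | split (c : ℕ) (absent present : Cert)

/-- A case distinction in which the pair `c` is immediately seen to be an edge. -/
abbrev Cert.need (c : ℕ) (t : Cert) : Cert := .split c .triv t

/-- Some edge at a vertex of `C` lies in no triangle, or some vertex of `D` has a neighbor that is
nonadjacent to two of its other neighbors. -/
def checkTriv (n : ℕ) (C D : List ℕ) (P A : ℕ) : Bool :=
  (C.any fun i => (List.range n).any fun j => P.testBit (edgeCode i j) &&
    (List.range n).all fun k => A.testBit (edgeCode i k) || A.testBit (edgeCode j k) ||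
      k.beq i || k.beq j) ||
  D.any fun i => (List.range n).any fun u => P.testBit (edgeCode i u) &&
    (List.range n).any fun v => A.testBit (edgeCode u v) && P.testBit (edgeCode i v) &&
      (List.range n).any fun w => A.testBit (edgeCode u w) && P.testBit (edgeCode i w) &&
        !(u.beq v) && !(u.beq w) && !(v.beq w)

/-- The transversal described by a leaf `wit W T E`. -/
def witEdges (W T E : List ℕ) : List ℕ :=
  E ++ (T.flatMap sides).filter fun c => !(W.any fun i => i.beq (c / 10) || i.beq (c % 10))

/-- Validity of a leaf `wit W T E`. -/
def checkWit (n : ℕ) (C : List ℕ) (P A : ℕ) (W T E : List ℕ) : Bool :=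
  !T.isEmpty && (W.all fun i => C.any fun j => i.beq j) &&
  (T.all fun t => (t / 100).blt (t / 10 % 10) && (t / 10 % 10).blt (t % 10) && (t % 10).blt n &&
    (sides t).all fun c => P.testBit c) &&
  decide (T.flatMap sides).Nodup &&
  (witEdges W T E).length.ble (2 * T.length) &&
  W.all fun i => (List.range n).all fun j => i.beq j ||
    A.testBit (edgeCode i j) || (mask (witEdges W T E)).testBit (edgeCode i j) ||
    (List.range j).all fun k => i.beq k ||
      A.testBit (edgeCode i k) || (mask (witEdges W T E)).testBit (edgeCode i k) ||
      A.testBit (edgeCode j k) || (mask (witEdges W T E)).testBit (edgeCode j k)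

/-- Validity of a certificate for configurations of `n` vertices in which the neighborhoods of the
vertices in `C` are contained in the configuration, the vertices in `D` have no forbidden link, and
the pairs in `P` are edges while those in `A` are not. -/
def Cert.check (n : ℕ) (C D : List ℕ) : Cert → ℕ → ℕ → Bool
  | .triv, P, A => checkTriv n C D P A
  | .wit W T E, P, A => checkWit n C P A W T E
  | .split c a p, P, A => a.check n C D P (1 <<< c ||| A) && p.check n C D (1 <<< c ||| P) A

theorem edgeCode_cases {i j : ℕ} (hi : i < 10) (hj : j < 10) :
    edgeCode i j / 10 = i ∧ edgeCode i j % 10 = j ∨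
      edgeCode i j / 10 = j ∧ edgeCode i j % 10 = i := by
  unfold edgeCode
  cases i.blt j <;> simp <;> omega

theorem testBit_insert {c m k : ℕ} :
    (1 <<< c ||| m).testBit k = true ↔ k = c ∨ m.testBit k = true := by
  rw [Nat.testBit_or, Nat.one_shiftLeft, Nat.testBit_two_pow, Bool.or_eq_true, decide_eq_true_iff,
    eq_comm]

theorem testBit_mask {l : List ℕ} {k : ℕ} : (mask l).testBit k = true ↔ k ∈ l := by
  induction l with
  | nil => simp [mask]
  | cons c l ih =>
    rw [mask, List.foldr_cons, testBit_insert, ← mask, ih, List.mem_cons]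

/-- No neighbor of `x` is nonadjacent to two other neighbors of `x`. -/
def NoCherry (G : SimpleGraph V) (x : V) : Prop :=
  ∀ u v w, G.Adj x u → G.Adj x v → G.Adj x w → u ≠ v → u ≠ w → v ≠ w → ¬ G.Adj u v →
    ¬ G.Adj u w → False

/-- Adjacency of the pair with the given code, for vertices listed by `f`. -/
def CodeAdj (G : SimpleGraph V) (f : ℕ → V) (c : ℕ) : Prop := G.Adj (f (c / 10)) (f (c % 10))

variable {G : SimpleGraph V} {f : ℕ → V} {n : ℕ} {C D : List ℕ} {P A : ℕ}

theorem codeAdj_edgeCode {i j : ℕ} (hi : i < 10) (hj : j < 10) :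
    CodeAdj G f (edgeCode i j) ↔ G.Adj (f i) (f j) := by
  unfold CodeAdj
  rcases edgeCode_cases hi hj with ⟨h1, h2⟩ | ⟨h1, h2⟩ <;> rw [h1, h2]
  exact G.adj_comm _ _

/-- The configuration listed by `f` on the indices below `n`. -/
structure IsConfig (G : SimpleGraph V) (f : ℕ → V) (n : ℕ) (C D : List ℕ) : Prop where
  le_ten : n ≤ 10
  inj : ∀ i < n, ∀ j < n, f i = f j → i = j
  closed : ∀ i ∈ C, i < n ∧ ∀ v, G.Adj (f i) v → ∃ j < n, f j = v
  noCherry : ∀ i ∈ D, i < n ∧ NoCherry G (f i)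

theorem IsConfig.checkTriv_sound (hf : IsConfig G f n C D) (hG : IsMinCounterexample G)
    (hP : ∀ c, P.testBit c = true → CodeAdj G f c)
    (hA : ∀ c, A.testBit c = true → ¬ CodeAdj G f c) :
    checkTriv n C D P A = false := by
  have hn := hf.le_ten
  rw [Bool.eq_false_iff]
  intro h
  simp only [checkTriv, Bool.or_eq_true, List.any_eq_true, List.all_eq_true, Bool.and_eq_true,
    List.mem_range, Nat.beq_eq, Bool.not_eq_true'] at h
  have adj : ∀ {i j}, i < n → j < n → P.testBit (edgeCode i j) = true → G.Adj (f i) (f j) :=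
    fun hi hj h => (codeAdj_edgeCode (by omega) (by omega)).1 (hP _ h)
  have nadj : ∀ {i j}, i < n → j < n → A.testBit (edgeCode i j) = true → ¬ G.Adj (f i) (f j) :=
    fun hi hj h h' => hA _ h ((codeAdj_edgeCode (by omega) (by omega)).2 h')
  rcases h with ⟨i, hi, j, hj, hij, hall⟩ | ⟨i, hi, u, hu, hiu, v, hv, ⟨huv, hiv⟩, w, hw, h⟩
  · obtain ⟨hin, hcl⟩ := hf.closed i hi
    obtain ⟨w, hiw, hjw⟩ := hG.exists_common_neighbor (adj hin hj hij)
    obtain ⟨k, hk, rfl⟩ := hcl w hiw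
    rcases hall k hk with ((h | h) | rfl) | rfl
    · exact nadj hin hk h hiw
    · exact nadj hj hk h hjw
    · exact G.irrefl hiw
    · exact G.irrefl hjw
  · obtain ⟨hin, hch⟩ := hf.noCherry i hi
    obtain ⟨⟨⟨⟨huw, hiw⟩, huv'⟩, huw'⟩, hvw'⟩ := h
    exact hch _ _ _ (adj hin hu hiu) (adj hin hv hiv) (adj hin hw hiw)
      (fun h => Nat.ne_of_beq_eq_false huv' (hf.inj _ hu _ hv h))
      (fun h => Nat.ne_of_beq_eq_false huw' (hf.inj _ hu _ hw h))
      (fun h => Nat.ne_of_beq_eq_false hvw' (hf.inj _ hv _ hw h)) (nadj hu hv huv) (nadj hu hw huw)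

theorem IsConfig.checkWit_sound (hf : IsConfig G f n C D) (hG : IsMinCounterexample G)
    (hP : ∀ c, P.testBit c = true → CodeAdj G f c)
    (hA : ∀ c, A.testBit c = true → ¬ CodeAdj G f c)
    (W T E : List ℕ) : checkWit n C P A W T E = false := by
  classical
  have hn := hf.le_ten
  rw [Bool.eq_false_iff]
  intro h
  simp only [checkWit, Bool.or_eq_true, List.any_eq_true, List.all_eq_true, Bool.and_eq_true,
    List.mem_range, Nat.beq_eq, Bool.not_eq_true', decide_eq_true_eq, Nat.blt_eq,
    Nat.ble_eq, List.isEmpty_eq_false_iff, testBit_mask] at h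
  obtain ⟨⟨⟨⟨⟨hne, hWC⟩, hT⟩, hnd⟩, hlen⟩, hkill⟩ := h
  obtain ⟨-, hpw⟩ := List.nodup_flatMap.1 hnd
  set tri : ℕ → Finset V := fun t => {f (t / 100), f (t / 10 % 10), f (t % 10)} with htri
  set pair : ℕ → Sym2 V := fun c => s(f (c / 10), f (c % 10)) with hpair
  have hdiv : ∀ a b, (10 * a + b % 10) / 10 = a := by omega
  have hmod : ∀ a b, (10 * a + b % 10) % 10 = b % 10 := by omega
  have hside : ∀ t ∈ T, ∀ c ∈ sides t, c / 10 < c % 10 ∧ c % 10 < n := by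
    intro t ht c hc
    obtain ⟨⟨⟨h1, h2⟩, h3⟩, -⟩ := hT t ht
    simp only [sides, List.mem_cons, List.not_mem_nil, or_false] at hc
    omega
  have hpairedge : ∀ t ∈ T, ∀ e ∈ G.edgeSet, (∀ v ∈ e, v ∈ tri t) → ∃ c ∈ sides t, e = pair c := by
    intro t ht e
    obtain ⟨⟨⟨h1, h2⟩, h3⟩, -⟩ := hT t ht
    induction e with | _ u v
    intro he hv
    have hu' := hv u (by simp)
    have hv' := hv v (by simp)
    have huv : u ≠ v := G.ne_of_adj he
    simp only [htri, Finset.mem_insert, Finset.mem_singleton] at hu' hv'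
    simp only [sides, hpair, List.mem_cons, List.not_mem_nil, or_false, exists_eq_or_imp,
      exists_eq_left, hdiv, hmod]
    rcases hu' with rfl | rfl | rfl <;> rcases hv' with rfl | rfl | rfl <;>
      first
      | exact absurd rfl huv
      | simp [Sym2.eq_swap]
  have hshare : ∀ t₁ ∈ T, ∀ t₂ ∈ T, ∀ e ∈ G.edgeSet, (∀ v ∈ e, v ∈ tri t₁) →
      (∀ v ∈ e, v ∈ tri t₂) → t₁ = t₂ := by
    intro t₁ h₁ t₂ h₂ e he he₁ he₂
    obtain ⟨c, hc, hec⟩ := hpairedge t₁ h₁ e he he₁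
    obtain ⟨d, hd, hed⟩ := hpairedge t₂ h₂ e he he₂
    have hc' := hside t₁ h₁ c hc
    have hd' := hside t₂ h₂ d hd
    have hcd : c = d := by
      rcases Sym2.eq_iff.1 (hec.symm.trans hed) with ⟨h, h'⟩ | ⟨h, h'⟩
      · have := hf.inj _ (by omega) _ (by omega) h
        have := hf.inj _ (by omega) _ (by omega) h'
        omega
      · have := hf.inj _ (by omega) _ (by omega) h
        have := hf.inj _ (by omega) _ (by omega) h'
        omega
    subst hcd
    by_contra hne
    have : Std.Symm (Function.onFun List.Disjoint sides) := ⟨fun _ _ h => h.symm⟩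
    exact hpw.forall h₁ h₂ hne hc hd
  have hclique : ∀ t ∈ T, G.IsNClique 3 (tri t) := by
    intro t ht
    obtain ⟨⟨⟨h1, h2⟩, h3⟩, hs⟩ := hT t ht
    have a1 := hP _ (hs (10 * (t / 100) + t / 10 % 10) (by simp [sides]))
    have a2 := hP _ (hs (10 * (t / 100) + t % 10) (by simp [sides]))
    have a3 := hP _ (hs (10 * (t / 10 % 10) + t % 10) (by simp [sides]))
    refine is3Clique_iff.2 ⟨_, _, _, ?_, ?_, ?_, rfl⟩
    · simpa only [CodeAdj, hdiv, hmod] using a1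
    · simpa only [CodeAdj, hdiv, hmod] using a2
    · simpa only [CodeAdj, hdiv, hmod] using a3
  have htriedge : ∀ t ∈ T, ∃ e ∈ G.edgeSet, ∀ v ∈ e, v ∈ tri t := by
    intro t ht
    obtain ⟨a, b, c, hab, -, -, habc⟩ := is3Clique_iff.1 (hclique t ht)
    exact ⟨s(a, b), hab, by simp [habc]⟩
  have hTcard : (T.map tri).toFinset.card = T.length := by
    rw [List.toFinset_card_of_nodup, List.length_map]
    refine List.Nodup.map_on (fun t₁ h₁ t₂ h₂ h => ?_) (hpw.imp fun {a b} hab hEq => ?_)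
    · obtain ⟨e, he, het⟩ := htriedge t₁ h₁
      exact hshare t₁ h₁ t₂ h₂ e he het (h ▸ het)
    · subst hEq
      exact hab (a := 10 * (a / 100) + a / 10 % 10) (by simp [sides]) (by simp [sides])
  set S : Finset (Sym2 V) :=
    (((witEdges W T E).filter fun c => decide (CodeAdj G f c)).map pair).toFinset with hS
  have hmemS : ∀ c ∈ witEdges W T E, CodeAdj G f c → pair c ∈ S := by
    intro c hc hadj
    simp only [hS, List.mem_toFinset, List.mem_map, List.mem_filter, decide_eq_true_eq]
    exact ⟨c, ⟨hc, hadj⟩, rfl⟩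
  have hmemS' : ∀ i < n, ∀ j < n, edgeCode i j ∈ witEdges W T E → G.Adj (f i) (f j) →
      s(f i, f j) ∈ S := by
    intro i hi j hj hc hadj
    have h1 := hmemS _ hc ((codeAdj_edgeCode (by omega) (by omega)).2 hadj)
    rcases edgeCode_cases (show i < 10 by omega) (show j < 10 by omega) with ⟨h, h'⟩ | ⟨h, h'⟩
    · simpa only [hpair, h, h'] using h1
    · rw [Sym2.eq_swap]
      simpa only [hpair, h, h'] using h1
  have hScard : S.card ≤ 2 * (T.map tri).toFinset.card := by
    rw [hTcard]
    refine (List.toFinset_card_le _).trans ?_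
    rw [List.length_map]
    exact (List.length_filter_le _ _).trans hlen
  set F : Set (Sym2 V) := {e | ∃ i ∈ W, f i ∈ e} with hF
  have hcover : ∀ t ∈ T, ∀ c ∈ sides t, CodeAdj G f c → pair c ∈ S ∨ pair c ∈ F := by
    intro t ht c hc hadj
    by_cases hW : ∃ i ∈ W, i = c / 10 ∨ i = c % 10
    · obtain ⟨i, hi, hic⟩ := hW
      exact Or.inr ⟨i, hi, by rcases hic with rfl | rfl <;> simp [hpair]⟩
    · refine Or.inl (hmemS c ?_ hadj)
      rw [witEdges, List.mem_append, List.mem_filter, List.mem_flatMap]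
      refine Or.inr ⟨⟨t, ht, hc⟩, ?_⟩
      rw [Bool.not_eq_true', Bool.eq_false_iff]
      intro h
      simp only [List.any_eq_true, Bool.or_eq_true, Nat.beq_eq] at h
      exact hW h
  have hred : ∀ {e : Sym2 V}, e ∈ G.edgeSet → e ∉ S ∧ e ∉ F := by
    intro e he
    refine hG.notMem_of_reduction (T := (T.map tri).toFinset) ?_ ⟨?_, ?_⟩ ?_ ?_ hScard he
    · intro e he
      simp only [hS, List.coe_toFinset, Set.mem_ofPred_eq, List.mem_map, List.mem_filter,
        decide_eq_true_eq] at he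
      obtain ⟨c, ⟨-, hc⟩, rfl⟩ := he
      exact hc
    · intro t ht
      obtain ⟨t', ht', rfl⟩ := List.mem_map.1 (List.mem_toFinset.1 ht)
      exact hclique t' ht'
    · intro s hs t ht hst e he hest
      obtain ⟨s', hs', rfl⟩ := List.mem_map.1 (List.mem_toFinset.1 hs)
      obtain ⟨t', ht', rfl⟩ := List.mem_map.1 (List.mem_toFinset.1 ht)
      exact hst (congrArg tri (hshare s' hs' t' ht' e he hest.1 hest.2))
    · rintro t ht e ⟨i, hi, hie⟩ - het
      have hit := het _ hie
      obtain ⟨j', hj', hij'⟩ := hWC i hi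
      subst hij'
      obtain ⟨hin, hcl⟩ := hf.closed _ hj'
      obtain ⟨v, w, hiv, hiw, hvw, hvt, hwt⟩ : ∃ v w, G.Adj (f i) v ∧ G.Adj (f i) w ∧ G.Adj v w ∧
          v ∈ t ∧ w ∈ t := by
        obtain ⟨a, b, c, hab, hac, hbc, rfl⟩ := is3Clique_iff.1 ht
        simp only [Finset.mem_insert, Finset.mem_singleton] at hit
        rcases hit with h | h | h <;> rw [h]
        · exact ⟨b, c, hab, hac, hbc, by simp, by simp⟩
        · exact ⟨a, c, hab.symm, hbc, hac, by simp, by simp⟩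
        · exact ⟨a, b, hac.symm, hbc.symm, hab, by simp, by simp⟩
      obtain ⟨j, hj, rfl⟩ := hcl v hiv
      obtain ⟨k, hk, rfl⟩ := hcl w hiw
      have key : ∀ j < n, ∀ k < j, G.Adj (f i) (f j) → G.Adj (f i) (f k) → G.Adj (f j) (f k) →
          f j ∈ t → f k ∈ t → ∃ e ∈ S, ∀ v ∈ e, v ∈ t := by
        intro j hj k hkj hij hik hjk hjt hkt
        have hkn : k < n := hkj.trans hj
        have nadj : ∀ {i j}, i < n → j < n → G.Adj (f i) (f j) →
            ¬ A.testBit (edgeCode i j) = true :=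
          fun hi hj h h' => hA _ h' ((codeAdj_edgeCode (by omega) (by omega)).2 h)
        rcases hkill i hi j hj with ((h | h) | h) | h
        · exact absurd (h ▸ hij) G.irrefl
        · exact absurd h (nadj hin hj hij)
        · exact ⟨_, hmemS' i hin j hj h hij, by simp [hit, hjt]⟩
        · rcases h k hkj with (((h | h) | h) | h) | h
          · exact absurd (h ▸ hik) G.irrefl
          · exact absurd h (nadj hin hkn hik)
          · exact ⟨_, hmemS' i hin k hkn h hik, by simp [hit, hkt]⟩
          · exact absurd h (nadj hj hkn hjk)
          · exact ⟨_, hmemS' j hj k hkn h hjk, by simp [hjt, hkt]⟩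
      rcases lt_trichotomy j k with h | h | h
      · exact key k hk j h hiw hiv hvw.symm hwt hvt
      · exact absurd (h ▸ hvw) G.irrefl
      · exact key j hj k h hiv hiw hvw hvt hwt
    · intro t ht e he het
      obtain ⟨t', ht', rfl⟩ := List.mem_map.1 (List.mem_toFinset.1 ht)
      obtain ⟨c, hc, rfl⟩ := hpairedge t' ht' e he het
      exact hcover t' ht' c hc he
  obtain ⟨t, ht⟩ := List.exists_mem_of_ne_nil T hne
  obtain ⟨e, he, het⟩ := htriedge t ht
  obtain ⟨c, hc, rfl⟩ := hpairedge t ht e he het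
  obtain ⟨h1, h2⟩ := hred he
  rcases hcover t ht c hc he with h | h
  exacts [h1 h, h2 h]

theorem IsConfig.check_sound (hf : IsConfig G f n C D) (hG : IsMinCounterexample G) (t : Cert)
    (hP : ∀ c, P.testBit c = true → CodeAdj G f c)
    (hA : ∀ c, A.testBit c = true → ¬ CodeAdj G f c) : t.check n C D P A = false := by
  induction t generalizing P A with
  | triv => exact hf.checkTriv_sound hG hP hA
  | wit W T E => exact hf.checkWit_sound hG hP hA W T E
  | split c a p iha ihp =>
    rw [Cert.check, Bool.and_eq_false_iff]
    by_cases hc : CodeAdj G f c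
    · refine Or.inr (ihp (fun k hk => ?_) hA)
      rcases testBit_insert.1 hk with rfl | hk
      exacts [hc, hP k hk]
    · refine Or.inl (iha hP fun k hk => ?_)
      rcases testBit_insert.1 hk with rfl | hk
      exacts [hc, hA k hk]

/-- A vertex of degree one. -/
def degreeOneCert : Cert :=
  .triv

/-- A vertex of degree two. -/
def degreeTwoCert : Cert :=
  .need 12 (.wit [0] [12] [])

/-- A vertex of degree three. -/
def degreeThreeCert : Cert :=
  .split 12 (.need 13 (.wit [0] [13] [2])) (.wit [0] [12] [3])

/-- A vertex of degree four. -/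
def degreeFourCert : Cert :=
  .split 12 (.need 24 (.need 13 (.wit [0] [13, 24] [1, 3]))) (.split 34 (.need 24 (.need 13
  (.wit [0] [13, 24] [1, 2]))) (.wit [0] [12, 34] [1, 2]))

/-- A cherry in the link of a vertex of degree four. -/
def cherryFourCert : Cert :=
  .split 23 (.wit [0] [14] [4]) (.wit [0] [14, 23] [2, 3])

/-- A cherry in the link of a vertex of degree five. -/
def cherryFiveCert : Cert :=
  .split 23 (.split 25 (.split 35 (.split 15 (.wit [0] [14] [4]) (.wit [0] [15] [4]))
  (.wit [0] [14, 35] [1, 4])) (.wit [0] [14, 25] [4, 5])) (.wit [0] [14, 23] [4, 5])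

/-- A cherry in the link of a vertex of degree six. -/
def cherrySixCert : Cert :=
  .split 23 (.split 36 (.split 35 (.need 34 (.split 26 (.split 16 (.split 25 (.split 56 (.split 15
  (.wit [0] [14] [4]) (.wit [0] [15] [4])) (.wit [0] [14, 56] [1, 4])) (.wit [0] [14, 25] [4, 5]))
  (.wit [0] [16, 34] [4, 5])) (.split 15 (.split 25 (.wit [0] [14, 26] [4, 6])
  (.wit [0] [14, 25] [4, 6])) (.wit [0] [15, 26, 34] [1, 4, 5])))) (.split 26 (.split 16
  (.wit [0] [14, 35] [4, 5]) (.wit [0] [16, 35] [4, 5])) (.wit [0] [14, 26, 35] [1, 4, 5])))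
  (.split 25 (.split 26 (.need 24 (.split 15 (.split 35 (.wit [0] [14, 36] [4, 6])
  (.wit [0] [14, 35] [4, 6])) (.wit [0] [15, 24, 36] [1, 4, 5]))) (.split 35 (.split 15
  (.wit [0] [14, 26] [4, 6]) (.wit [0] [15, 26] [4, 6])) (.wit [0] [14, 26, 35] [1, 4, 6])))
  (.wit [0] [14, 25, 36] [4, 5, 6]))) (.split 56 (.split 25 (.split 26 (.split 46 (.split 15
  (.split 16 (.wit [0] [14, 23] [3, 4]) (.wit [0] [16, 23] [3, 4])) (.split 36 (.need 16
  (.wit [0] [16, 23] [4, 5])) (.split 24 (.split 45 (.wit [0] [14, 23] [1, 3])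
  (.wit [0] [23, 45] [1, 3])) (.wit [0] [15, 24, 36] [1, 3, 4])))) (.split 15 (.split 16
  (.wit [0] [14, 23] [3, 4]) (.wit [0] [16, 23] [3, 4])) (.wit [0] [15, 23, 46] [1, 3, 4])))
  (.split 35 (.split 15 (.wit [0] [14, 23] [4, 6]) (.wit [0] [15, 23] [4, 6]))
  (.wit [0] [14, 26, 35] [1, 3, 4]))) (.split 36 (.split 35 (.split 15 (.split 16
  (.wit [0] [14, 23] [2, 4]) (.wit [0] [16, 23] [2, 4])) (.split 46 (.split 26 (.need 16
  (.wit [0] [16, 23] [4, 5])) (.split 34 (.split 45 (.wit [0] [14, 23] [1, 2])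
  (.wit [0] [23, 45] [1, 2])) (.wit [0] [15, 26, 34] [1, 2, 4])))
  (.wit [0] [15, 23, 46] [1, 2, 4]))) (.split 26 (.split 46 (.need 16 (.wit [0] [16, 23] [4, 5]))
  (.split 15 (.split 16 (.wit [0] [14, 23] [4, 5]) (.wit [0] [16, 23] [4, 5]))
  (.wit [0] [15, 23, 46] [1, 4, 5]))) (.wit [0] [14, 26, 35] [1, 2, 4]))) (.split 34
  (.wit [0] [14, 25, 36] [2, 5, 6]) (.split 24 (.wit [0] [14, 25, 36] [3, 5, 6])
  (.wit [0] [14, 25, 36, 234] [5, 6]))))) (.wit [0] [14, 23, 56] [4, 5, 6]))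

/-- Nonadjacent vertices of degrees five and five with four common neighbors. -/
def nonadjFiveFiveFourCert : Cert :=
  .split 23 (.need 25 (.need 35 (.need 34 (.need 24
  (.wit [0, 1] [24, 35, 125, 134] [2, 6, 17, 45]))))) (.split 24 (.need 34 (.need 45 (.need 25
  (.wit [0, 1] [23, 45, 125, 134] [2, 6, 17, 35])))) (.split 45 (.need 46 (.need 35
  (.wit [0, 1] [23, 46, 124, 135] [6, 17, 25, 34]))) (.split 35 (.need 37
  (.wit [0, 1] [23, 45, 124, 137] [6, 17, 25, 34]))
  (.wit [0, 1] [23, 45, 124, 135] [6, 17, 25, 34]))))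

/-- Nonadjacent vertices of degrees five and five with five common neighbors. -/
def nonadjFiveFiveFiveCert : Cert :=
  .split 23 (.need 25 (.need 35 (.need 34 (.need 24
  (.wit [0, 1] [24, 35, 125, 134] [2, 6, 16, 45]))))) (.split 24 (.need 34 (.need 45 (.need 25
  (.wit [0, 1] [23, 45, 125, 134] [2, 6, 16, 35])))) (.split 45 (.need 46 (.need 35
  (.wit [0, 1] [23, 46, 124, 135] [6, 16, 25, 34]))) (.split 35 (.need 36
  (.wit [0, 1] [23, 45, 124, 136] [6, 16, 25, 34]))
  (.wit [0, 1] [23, 45, 124, 135] [6, 16, 25, 34]))))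

/-- Nonadjacent vertices of degrees five and six with four common neighbors. -/
def nonadjFiveSixFourCert : Cert :=
  .split 23 (.need 24 (.need 34 (.need 35 (.need 25
  (.wit [0, 1] [24, 35, 125, 134] [6, 17, 18, 45]))))) (.split 24 (.need 34 (.need 45 (.need 25
  (.wit [0, 1] [23, 45, 125, 134] [6, 17, 18, 35])))) (.split 35 (.need 45 (.need 58 (.need 37
  (.wit [0, 1] [23, 45, 124, 137, 158] [6, 17, 18, 25, 34])))) (.split 78 (.split 45 (.need 47
  (.need 57 (.need 46 (.need 34 (.need 25 (.wit [0, 1] [24, 35, 125, 134] [6, 17, 18, 23]))))))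
  (.split 34 (.wit [0, 1] [23, 45, 124, 135] [6, 17, 18, 25]) (.split 25
  (.wit [0, 1] [23, 45, 124, 135] [6, 17, 18, 34]) (.split 56 (.need 27 (.need 47 (.need 37
  (.need 57 (.wit [0, 1] [23, 45, 124, 135, 257, 347] [6, 18]))))) (.split 26 (.need 27 (.need 47
  (.need 57 (.need 37 (.wit [0, 1] [23, 45, 124, 135, 257, 347] [6, 18]))))) (.split 46 (.need 27
  (.need 57 (.need 47 (.need 37 (.wit [0, 1] [23, 45, 124, 135, 257, 347] [6, 18]))))) (.split 36
  (.need 27 (.wit [0, 1] [34, 56, 127, 145, 235, 246] [17, 18]))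
  (.wit [0, 1] [23, 45, 124, 135, 256, 346] [17, 18])))))))) (.split 45 (.need 46
  (.wit [0, 1] [23, 46, 124, 135, 178] [6, 17, 18, 25, 34]))
  (.wit [0, 1] [23, 45, 124, 135, 178] [6, 17, 18, 25, 34])))))

/-- Nonadjacent vertices of degrees five and six with five common neighbors. -/
def nonadjFiveSixFiveCert : Cert :=
  .split 23 (.need 24 (.need 34 (.need 35 (.need 25
  (.wit [0, 1] [24, 35, 125, 134] [6, 16, 17, 45]))))) (.split 24 (.need 34 (.need 45 (.need 25
  (.wit [0, 1] [23, 45, 125, 134] [6, 16, 17, 35])))) (.split 35 (.need 45 (.need 57 (.need 36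
  (.wit [0, 1] [23, 45, 124, 136, 157] [6, 16, 17, 25, 34])))) (.split 67 (.need 46 (.need 56
  (.need 36 (.need 26 (.split 45 (.wit [0, 1] [24, 56, 135, 146, 236] [17, 25, 34]) (.split 34
  (.wit [0, 1] [23, 45, 124, 135] [6, 16, 17, 25]) (.split 25
  (.wit [0, 1] [23, 45, 124, 135] [6, 16, 17, 34])
  (.wit [0, 1] [23, 45, 124, 135, 256, 346] [12, 17])))))))) (.split 45 (.need 46
  (.wit [0, 1] [23, 46, 124, 135, 167] [6, 16, 17, 25, 34]))
  (.wit [0, 1] [23, 45, 124, 135, 167] [6, 16, 17, 25, 34])))))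

/-- Nonadjacent vertices of degrees six and six with five common neighbors. -/
def nonadjSixSixFiveCert : Cert :=
  .split 24 (.need 34 (.need 25 (.need 45 (.need 23 (.split 67 (.split 68 (.need 46 (.need 37
  (.need 36 (.need 47 (.split 35 (.wit [0, 1] [23, 45, 125, 134] [6, 7, 16, 18])
  (.wit [0, 1] [25, 36, 47, 123, 146, 345] [6, 7, 16, 18]))))))
  (.wit [0, 1] [23, 45, 125, 134, 168] [6, 7, 16, 18, 35]))
  (.wit [0, 1] [23, 45, 67, 125, 134] [6, 7, 16, 18, 35])))))) (.split 35 (.need 23 (.need 45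
  (.need 36 (.need 58 (.split 67 (.need 56 (.need 25 (.need 26
  (.wit [0, 1] [23, 45, 124, 136, 158, 256] [4, 7, 14, 18]))))
  (.wit [0, 1] [23, 45, 67, 124, 136, 158] [6, 7, 16, 18, 25, 34])))))) (.split 67 (.need 36
  (.need 56 (.need 46 (.need 27 (.need 26 (.split 45 (.split 23 (.need 34
  (.wit [0, 1] [24, 56, 126, 135, 346] [7, 18, 25]))
  (.wit [0, 1] [27, 35, 46, 124, 156, 236] [7, 18, 25, 34])) (.split 28 (.need 25 (.need 68
  (.wit [0, 1] [27, 36, 45, 124, 135, 168, 256] [3, 7, 13, 18, 46])))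
  (.wit [0, 1] [27, 35, 46, 128, 136, 145] [2, 7, 12, 18, 34, 56])))))))) (.split 23 (.need 34
  (.need 25 (.wit [0, 1] [24, 35, 67, 125, 134] [6, 7, 16, 18, 45]))) (.split 68 (.need 26
  (.need 56 (.need 36 (.need 46 (.need 28 (.split 34
  (.wit [0, 1] [24, 35, 67, 128, 146, 236] [5, 7, 15, 18])
  (.wit [0, 1] [24, 35, 67, 128, 134, 156, 236] [5, 7, 15, 18, 46]))))))) (.split 45 (.need 46
  (.need 57 (.wit [0, 1] [23, 46, 57, 124, 135, 168] [6, 7, 16, 18, 25, 34])))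
  (.wit [0, 1] [23, 45, 67, 124, 135, 168] [6, 7, 16, 18, 25, 34]))))))

/-- Nonadjacent vertices of degrees six and six with six common neighbors. -/
def nonadjSixSixSixCert : Cert :=
  .split 25 (.need 45 (.need 35 (.need 24 (.need 23 (.split 67 (.need 57 (.need 36 (.need 47
  (.split 34 (.wit [0, 1] [23, 45, 124, 135] [6, 7, 16, 17])
  (.wit [0, 1] [23, 47, 124, 136, 157, 345] [6, 7, 16, 17])))))
  (.wit [0, 1] [23, 45, 67, 124, 135] [6, 7, 16, 17, 34])))))) (.split 34 (.need 35 (.need 45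
  (.need 23 (.need 24 (.split 67 (.need 57 (.need 56 (.need 36 (.need 26
  (.wit [0, 1] [23, 45, 124, 136, 157, 256] [7, 17, 35, 46])))))
  (.wit [0, 1] [23, 45, 67, 124, 135] [6, 7, 16, 17, 25])))))) (.split 46 (.need 26 (.need 56
  (.need 24 (.need 45 (.need 67 (.split 23 (.need 35
  (.wit [0, 1] [24, 35, 67, 125, 134] [6, 7, 16, 17, 45])) (.split 35
  (.wit [0, 1] [23, 45, 67, 125, 134] [6, 7, 16, 17, 24])
  (.wit [0, 1] [23, 45, 67, 124, 135, 256] [3, 7, 13, 17])))))))) (.split 26 (.need 36 (.need 67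
  (.need 24 (.need 27 (.split 57 (.wit [0, 1] [25, 34, 67, 127, 136] [3, 4, 13, 14, 56])
  (.wit [0, 1] [24, 36, 57, 125, 134, 167] [3, 4, 13, 14, 27, 56])))))) (.split 45 (.need 57
  (.need 35 (.need 24 (.split 23 (.wit [0, 1] [24, 35, 125, 134] [6, 7, 16, 17]) (.split 67
  (.need 56 (.wit [0, 1] [23, 46, 57, 124, 135, 256] [3, 7, 13, 17]))
  (.wit [0, 1] [23, 46, 57, 124, 135, 167] [2, 3, 12, 13, 47, 56])))))) (.split 24 (.need 23
  (.split 67 (.need 57 (.wit [0, 1] [23, 46, 57, 126, 134] [5, 7, 15, 17, 36]))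
  (.wit [0, 1] [23, 45, 67, 125, 134] [6, 7, 16, 17, 35]))) (.split 36 (.need 23 (.need 67
  (.wit [0, 1] [23, 45, 67, 125, 134, 246] [5, 7, 15, 17]))) (.split 56 (.need 67
  (.wit [0, 1] [25, 34, 67, 136, 145, 246] [3, 7, 13, 17])) (.split 35 (.need 57
  (.wit [0, 1] [24, 36, 57, 125, 134, 456] [2, 7, 12, 17])) (.split 23 (.split 67 (.need 47
  (.wit [0, 1] [24, 35, 125, 136, 147, 456] [7, 17, 26, 34]))
  (.wit [0, 1] [24, 35, 67, 125, 134] [6, 7, 16, 17, 45]))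
  (.wit [0, 1] [23, 45, 124, 135, 256, 346] [7, 17]))))))))))

/-- A vertex of degree five whose neighbor has no further neighbors. -/
def adjFiveZeroCert : Cert :=
  .split 35 (.need 15 (.need 45 (.need 34 (.split 12 (.wit [0, 1] [15, 34] [1, 2, 45]) (.split 14
  (.need 24 (.wit [0, 1] [15, 24] [3, 5, 12])) (.wit [0, 1] [12, 34, 145] [1, 2, 12]))))))
  (.split 12 (.need 13 (.need 14 (.need 15 (.wit [1] [14, 135] [1, 14])))) (.split 15 (.need 13
  (.need 14 (.split 34 (.need 25 (.wit [0, 1] [13, 25] [3, 4, 12]))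
  (.wit [0, 1] [12, 35, 134] [1, 2, 4, 12])))) (.split 13 (.need 14 (.split 45 (.need 25
  (.wit [0, 1] [14, 25] [1, 3, 24])) (.wit [0, 1] [12, 35, 145] [1, 2, 3, 12]))) (.split 34
  (.need 45 (.wit [0, 1] [12, 45, 135] [1, 2, 12])) (.wit [0, 1] [12, 34, 135] [1, 2, 12, 45])))))

/-- A vertex of degree five whose neighbor has one further neighbor. -/
def adjFiveOneCert : Cert :=
  .split 13 (.need 35 (.need 12 (.need 14 (.need 34 (.need 23 (.need 15 (.split 45 (.need 25
  (.wit [0, 1] [14, 23, 125] [1, 3, 16, 24])) (.split 25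
  (.wit [0, 1] [12, 34, 145] [1, 3, 16, 24]) (.wit [0, 1] [12, 34, 145, 235] [1, 16, 24])))))))))
  (.split 12 (.need 24 (.need 14 (.need 23 (.need 25 (.need 15 (.split 35 (.need 45
  (.wit [0, 1] [13, 24, 145] [1, 2, 16, 34])) (.split 45
  (.wit [0, 1] [14, 23, 135] [1, 2, 16, 34]) (.wit [0, 1] [13, 24, 145, 235] [1, 16, 34]))))))))
  (.split 14 (.need 15 (.need 34 (.split 26 (.split 35 (.split 36 (.need 56
  (.wit [0, 1] [12, 34, 156] [1, 2, 4, 12])) (.wit [0, 1] [12, 34, 136] [2, 5, 13, 15]))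
  (.wit [0, 1] [12, 34, 135] [2, 5, 13, 15])) (.wit [0, 1] [15, 34, 126] [2, 5, 13, 15]))))
  (.split 34 (.need 35 (.need 45 (.split 15 (.need 24 (.wit [0, 1] [13, 45, 124] [1, 5, 16, 23]))
  (.wit [0, 1] [12, 35, 145] [1, 2, 12, 16])))) (.split 15 (.split 26
  (.wit [1] [12, 134] [13, 14]) (.need 35 (.wit [0, 1] [14, 35, 126] [2, 4, 13, 14]))) (.split 46
  (.split 45 (.need 35 (.wit [0, 1] [12, 34, 135] [1, 2, 12, 16])) (.split 35
  (.wit [0, 1] [12, 34, 145] [1, 2, 12, 16]) (.split 26 (.split 24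
  (.wit [0, 1] [12, 34, 135] [2, 4, 13, 15]) (.split 25 (.wit [0, 1] [13, 24, 145] [1, 3, 13, 15])
  (.wit [0, 1] [12, 34, 135, 245] [1, 16, 23]))) (.wit [1] [14, 126, 135] [12, 13, 15]))))
  (.split 35 (.need 45 (.wit [0, 1] [12, 34, 145] [1, 2, 12, 16]))
  (.wit [0, 1] [12, 34, 135, 146] [1, 2, 12, 16, 45])))))))

/-- A vertex of degree five whose neighbor has two further neighbors. -/
def adjFiveTwoCert : Cert :=
  .split 13 (.need 12 (.need 34 (.need 14 (.need 15 (.split 45 (.split 57 (.need 35 (.need 24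
  (.need 23 (.need 25 (.wit [0, 1] [14, 35, 125, 234] [1, 16, 17]))))) (.split 46 (.split 47
  (.need 23 (.wit [0, 1] [14, 23, 157] [4, 5, 12, 16])) (.split 56 (.need 23
  (.wit [0, 1] [14, 23, 157] [4, 5, 12, 17])) (.wit [0, 1] [12, 34, 147, 156] [1, 2, 3, 12, 17])))
  (.wit [0, 1] [12, 34, 146, 157] [2, 5, 12, 14, 16]))) (.split 67 (.split 46 (.split 56 (.need 35
  (.split 47 (.wit [0, 1] [12, 35, 145] [2, 4, 12, 15])
  (.wit [0, 1] [12, 35, 147] [2, 4, 12, 15]))) (.split 47 (.wit [1] [14, 156] [12, 15])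
  (.wit [0, 1] [12, 34, 147, 156] [1, 2, 5, 12, 15]))) (.split 57 (.need 35 (.need 23 (.split 27
  (.split 56 (.wit [0, 1] [12, 34, 145] [2, 5, 12, 14])
  (.wit [0, 1] [12, 34, 156] [2, 5, 12, 14]))
  (.wit [0, 1] [15, 23, 127, 146] [4, 5, 12, 14, 15]))))
  (.wit [0, 1] [12, 34, 146, 157] [2, 5, 12, 14, 15])))
  (.wit [0, 1] [12, 34, 145, 167] [2, 5, 12, 14, 15]))))))) (.split 35 (.need 45 (.need 34
  (.need 15 (.split 36 (.split 37 (.split 67 (.need 25 (.split 12 (.need 14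
  (.wit [0, 1] [13, 25, 145] [3, 4, 14, 15])) (.split 24
  (.wit [0, 1] [13, 45, 125] [3, 12, 14, 15]) (.split 14
  (.wit [0, 1] [13, 24, 125] [3, 5, 12, 15]) (.split 46 (.split 47
  (.wit [0, 1] [12, 34, 145] [1, 2, 12, 15]) (.wit [0, 1] [13, 24, 125, 147] [2, 4, 12, 13, 15]))
  (.wit [0, 1] [13, 24, 125, 146] [3, 4, 12, 14, 15])))))) (.split 14
  (.wit [0, 1] [13, 45, 167] [2, 3, 12, 15]) (.wit [1] [13, 145, 167] [12, 14, 15]))) (.split 14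
  (.need 12 (.split 56 (.need 24 (.wit [0, 1] [15, 24, 137] [3, 5, 12, 17]))
  (.wit [0, 1] [12, 34, 137, 156] [1, 2, 4, 12, 17]))) (.split 12 (.need 24 (.split 67
  (.wit [0, 1] [15, 24, 137] [3, 5, 14, 15]) (.wit [0, 1] [13, 24, 145, 167] [1, 2, 16, 17, 34])))
  (.wit [0, 1] [12, 34, 137, 145] [1, 2, 12, 16, 17])))) (.split 14 (.need 12 (.split 57 (.need 25
  (.need 23 (.wit [0, 1] [23, 45, 125, 136] [1, 4, 16, 17])))
  (.wit [0, 1] [12, 34, 136, 157] [2, 5, 12, 13, 16]))) (.split 12 (.need 24 (.split 67 (.split 57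
  (.split 37 (.wit [0, 1] [13, 24, 145] [3, 5, 14, 16])
  (.wit [0, 1] [15, 24, 137] [3, 5, 14, 16])) (.wit [1] [14, 136, 157] [13, 14, 15]))
  (.wit [0, 1] [13, 24, 145, 167] [1, 2, 16, 17, 34])))
  (.wit [0, 1] [12, 34, 136, 145] [1, 2, 12, 16, 17]))))))) (.split 45 (.need 14 (.need 34
  (.need 15 (.split 46 (.split 12 (.need 24 (.split 56 (.need 23
  (.wit [0, 1] [14, 23, 135] [4, 5, 13, 17])) (.wit [0, 1] [24, 35, 134, 156] [1, 2, 13, 17])))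
  (.split 47 (.split 67 (.need 25 (.split 57 (.split 37 (.wit [0, 1] [12, 34, 135] [1, 2, 12, 16])
  (.wit [0, 1] [14, 35, 125, 137] [1, 2, 12, 16, 34]))
  (.wit [0, 1] [12, 35, 134, 157] [1, 2, 12, 13, 15])))
  (.wit [0, 1] [12, 34, 135, 167] [1, 2, 12, 13, 15]))
  (.wit [0, 1] [12, 34, 135, 147] [1, 2, 12, 16, 17]))) (.split 12 (.need 24 (.split 57 (.need 25
  (.wit [0, 1] [25, 34, 135, 146] [1, 2, 16, 17]))
  (.wit [0, 1] [13, 24, 146, 157] [3, 5, 13, 14, 16])))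
  (.wit [0, 1] [12, 34, 135, 146] [1, 2, 12, 16, 17])))))) (.split 24 (.need 23 (.need 12
  (.need 14 (.need 34 (.split 46 (.split 26 (.split 15 (.wit [0, 1] [12, 35, 134] [2, 4, 13, 17])
  (.split 47 (.split 67 (.split 36 (.wit [0, 1] [15, 23, 134] [1, 5, 15, 17])
  (.wit [0, 1] [12, 34, 136, 145] [1, 5, 15, 17, 23]))
  (.wit [0, 1] [12, 34, 135, 167] [2, 4, 12, 13, 15]))
  (.wit [0, 1] [12, 34, 135, 147] [2, 4, 13, 15, 17]))) (.split 15
  (.wit [0, 1] [14, 35, 126] [2, 4, 13, 17]) (.wit [0, 1] [14, 23, 126, 135] [2, 4, 13, 15, 17])))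
  (.split 15 (.split 47 (.split 27 (.wit [0, 1] [12, 35, 134] [2, 4, 13, 16])
  (.wit [0, 1] [13, 45, 127, 146] [1, 2, 3, 13, 16])) (.split 36 (.split 37 (.need 25
  (.wit [0, 1] [12, 45, 134, 235] [1, 16, 17]))
  (.wit [0, 1] [12, 34, 137, 146] [1, 2, 5, 12, 17]))
  (.wit [0, 1] [12, 34, 136, 147] [1, 5, 16, 17, 23])))
  (.wit [0, 1] [15, 34, 123, 146] [1, 5, 15, 16, 17]))))))) (.split 23 (.need 34 (.need 12
  (.need 25 (.split 14 (.need 15 (.wit [0, 1] [12, 34, 135, 245] [1, 16, 17]))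
  (.wit [0, 1] [12, 35, 134, 245] [1, 16, 17]))))) (.split 15 (.need 12 (.need 14 (.need 25
  (.split 34 (.wit [0, 1] [13, 45, 124, 235] [1, 16, 17]) (.split 36 (.split 46 (.split 67
  (.split 37 (.wit [0, 1] [12, 35, 134, 245] [3, 12, 14])
  (.wit [0, 1] [12, 34, 137, 245] [3, 12, 14]))
  (.wit [0, 1] [12, 35, 134, 167] [1, 2, 4, 12, 17]))
  (.wit [0, 1] [25, 34, 123, 146] [3, 4, 12, 17])) (.split 47 (.split 37
  (.wit [0, 1] [25, 34, 124, 136] [3, 4, 12, 16]) (.wit [0, 1] [25, 34, 124, 137] [3, 4, 12, 16]))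
  (.wit [0, 1] [12, 34, 136, 147, 235] [4, 12, 13, 16]))))))) (.split 14 (.need 34 (.need 12
  (.split 67 (.split 57 (.split 25 (.wit [0, 1] [12, 45, 135, 234] [1, 16, 17]) (.split 37
  (.split 36 (.wit [0, 1] [12, 34, 135, 245] [3, 12, 15])
  (.wit [0, 1] [12, 34, 136, 245] [3, 12, 15])) (.wit [0, 1] [24, 35, 125, 137] [3, 5, 12, 16])))
  (.split 36 (.split 37 (.wit [0, 1] [12, 45, 135] [2, 3, 12, 15])
  (.wit [0, 1] [12, 45, 137] [2, 3, 12, 15]))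
  (.wit [0, 1] [12, 34, 136, 157] [2, 5, 12, 13, 15])))
  (.wit [0, 1] [12, 34, 135, 167] [2, 5, 12, 13, 15])))) (.split 12 (.split 67 (.split 57
  (.need 25 (.split 37 (.split 56 (.wit [0, 1] [13, 24, 145] [3, 5, 13, 14])
  (.wit [0, 1] [13, 24, 156] [3, 5, 13, 14])) (.wit [0, 1] [24, 35, 137, 145] [3, 5, 14, 16])))
  (.split 46 (.split 47 (.wit [0, 1] [14, 23, 135] [4, 5, 13, 15])
  (.wit [0, 1] [15, 23, 147] [4, 5, 13, 15]))
  (.wit [0, 1] [13, 24, 146, 157] [3, 5, 13, 14, 15])))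
  (.wit [0, 1] [13, 24, 145, 167] [3, 5, 13, 14, 15])) (.split 25
  (.wit [0, 1] [23, 45, 124, 135] [1, 16, 17, 34]) (.split 26 (.split 34
  (.wit [0, 1] [13, 24, 145, 235] [1, 16, 17]) (.split 46 (.split 37 (.split 47 (.split 67
  (.split 36 (.wit [0, 1] [23, 45, 125, 134] [3, 4, 12, 15])
  (.wit [0, 1] [12, 34, 136, 145] [1, 2, 3, 12, 15]))
  (.wit [0, 1] [12, 34, 135, 167] [2, 4, 12, 13, 15]))
  (.wit [0, 1] [12, 34, 135, 147, 245] [1, 16, 17, 23]))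
  (.wit [0, 1] [12, 34, 137, 145, 235] [1, 16, 17, 24]))
  (.wit [0, 1] [12, 34, 135, 146, 245] [1, 16, 17, 23])))
  (.wit [0, 1] [13, 24, 126, 145, 235] [1, 16, 17, 34]))))))))))

/-- A vertex of degree six whose neighbor has no further neighbors. -/
def adjSixZeroCert : Cert :=
  .split 13 (.need 34 (.need 12 (.need 15 (.need 14 (.split 45 (.need 16 (.need 46 (.need 56
  (.wit [0, 1] [12, 34, 56, 146] [1, 2, 3, 12])))) (.split 56 (.need 46
  (.wit [0, 1] [12, 46, 145] [1, 2, 3, 12]))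
  (.wit [0, 1] [12, 34, 56, 145] [1, 2, 3, 12, 46]))))))) (.split 34 (.need 36 (.need 35 (.need 46
  (.split 16 (.need 15 (.need 45 (.need 12 (.wit [0, 1] [12, 36, 45, 135] [1, 2, 4, 5, 12]))))
  (.split 12 (.need 15 (.wit [0, 1] [15, 46, 136] [1, 2, 5, 15]))
  (.wit [0, 1] [12, 35, 46, 136] [1, 2, 5, 12, 15])))))) (.split 12 (.need 24 (.need 15 (.need 14
  (.split 56 (.need 36 (.wit [0, 1] [15, 24, 36, 134] [1, 2, 5, 15, 46])) (.split 45 (.need 46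
  (.need 16 (.wit [0, 1] [13, 24, 56, 146] [1, 2, 3, 13])))
  (.wit [0, 1] [13, 24, 56, 145] [1, 2, 3, 13, 46])))))) (.split 15 (.need 56 (.need 16 (.split 36
  (.need 46 (.need 14 (.wit [0, 1] [12, 34, 56, 146] [1, 2, 3, 4, 12])))
  (.wit [0, 1] [12, 34, 56, 136] [1, 2, 5, 12, 46])))) (.split 35 (.need 56 (.need 36 (.split 16
  (.need 45 (.need 14 (.wit [0, 1] [12, 34, 56, 145] [1, 2, 3, 4, 12])))
  (.wit [0, 1] [12, 34, 56, 136] [1, 2, 4, 12, 14])))) (.split 46 (.need 56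
  (.wit [0, 1] [12, 34, 56, 135] [1, 2, 12, 36, 45])) (.split 16 (.need 56
  (.wit [0, 1] [12, 34, 56, 135] [1, 2, 6, 12, 45])) (.split 56 (.split 14 (.need 36
  (.wit [0, 1] [12, 35, 46, 136] [1, 2, 3, 4, 12]))
  (.wit [0, 1] [12, 34, 135, 146] [1, 2, 12, 36, 45])) (.split 14
  (.wit [0, 1] [12, 34, 56, 135] [1, 2, 4, 12, 36])
  (.wit [0, 1] [12, 34, 56, 135, 146] [1, 2, 3, 12, 13, 45])))))))))

/-- A vertex of degree six whose neighbor has one further neighbor. -/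
def adjSixOneCert : Cert :=
  .split 34 (.need 46 (.need 45 (.need 14 (.need 13 (.need 36 (.need 35 (.split 12 (.need 15
  (.need 16 (.wit [0, 1] [35, 46, 136, 145] [1, 2, 17, 56]))) (.split 15 (.need 16
  (.wit [0, 1] [12, 35, 46, 136] [1, 2, 5, 12, 17])) (.split 16
  (.wit [0, 1] [12, 35, 46, 145] [1, 2, 6, 12, 17])
  (.wit [0, 1] [12, 35, 46, 136, 145] [1, 2, 5, 12, 15, 17])))))))))) (.split 35 (.need 36
  (.need 13 (.need 45 (.need 56 (.need 15 (.split 16 (.need 12 (.need 14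
  (.wit [0, 1] [12, 34, 56, 145] [1, 2, 6, 12, 17]))) (.split 12 (.need 14
  (.wit [0, 1] [34, 56, 136, 145] [1, 2, 17, 46])) (.split 14
  (.wit [0, 1] [12, 34, 56, 136] [1, 2, 4, 12, 17])
  (.wit [0, 1] [12, 34, 56, 136, 145] [1, 2, 4, 12, 14, 17]))))))))) (.split 56 (.need 36
  (.need 45 (.need 15 (.need 16 (.need 25 (.need 46 (.need 26 (.split 12 (.need 13
  (.wit [0, 1] [15, 46, 136, 345] [1, 2, 17])) (.split 23 (.need 24
  (.wit [0, 1] [15, 24, 36, 126, 345] [1, 17, 25, 46])) (.split 24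
  (.wit [0, 1] [15, 23, 46, 126, 345] [1, 17, 25, 36])
  (.wit [0, 1] [15, 23, 46, 126, 245] [1, 3, 13, 17]))))))))))) (.split 13 (.need 14 (.need 16
  (.need 15 (.need 12 (.split 67 (.need 23 (.split 24 (.need 45 (.need 25
  (.wit [0, 1] [12, 34, 56, 145, 235] [1, 6, 16, 17]))) (.split 26 (.need 25
  (.wit [0, 1] [14, 23, 56, 125] [1, 3, 4, 14, 17])) (.split 46
  (.wit [0, 1] [15, 26, 34, 124] [1, 3, 5, 15, 17]) (.split 25
  (.wit [0, 1] [14, 23, 56, 126] [1, 3, 4, 14, 17])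
  (.wit [0, 1] [14, 23, 56, 125, 246] [1, 3, 17, 45])))))) (.split 45 (.need 46
  (.wit [0, 1] [12, 34, 56, 146] [1, 2, 3, 12, 17]))
  (.wit [0, 1] [12, 34, 56, 145, 167] [1, 2, 3, 12, 17, 46]))))))) (.split 15 (.need 14 (.need 16
  (.need 12 (.split 36 (.need 46 (.wit [0, 1] [12, 34, 56, 146] [1, 2, 5, 12, 17])) (.split 47
  (.need 25 (.split 46 (.wit [0, 1] [12, 34, 56, 136] [1, 2, 5, 12, 17]) (.split 24 (.split 37
  (.wit [0, 1] [12, 34, 56, 136] [2, 3, 4, 12, 16])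
  (.wit [0, 1] [12, 34, 56, 137] [2, 3, 4, 12, 16])) (.split 23
  (.wit [0, 1] [16, 24, 35, 134] [1, 5, 6, 16, 17])
  (.wit [0, 1] [12, 35, 46, 136, 234] [1, 5, 17, 26])))))
  (.wit [0, 1] [12, 34, 56, 136, 147] [1, 2, 5, 12, 17, 46])))))) (.split 46 (.need 14 (.split 12
  (.need 45 (.need 24 (.wit [0, 1] [13, 24, 56, 145] [1, 2, 3, 13, 17]))) (.split 47 (.need 16
  (.split 67 (.need 36 (.need 45 (.wit [0, 1] [12, 34, 56, 136, 145] [1, 2, 3, 12, 13, 15])))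
  (.wit [0, 1] [12, 34, 56, 135, 167] [1, 2, 12, 17, 36, 45])))
  (.wit [0, 1] [12, 34, 56, 135, 147] [1, 2, 12, 17, 36, 45])))) (.split 12 (.need 16 (.need 24
  (.need 14 (.split 45 (.wit [0, 1] [13, 24, 56, 146] [1, 2, 3, 13, 17])
  (.wit [0, 1] [13, 24, 56, 146, 345] [1, 2, 17, 36]))))) (.split 14 (.need 16 (.split 67
  (.split 36 (.wit [0, 1] [12, 34, 56, 135] [1, 2, 4, 12, 17]) (.split 23 (.need 25
  (.wit [0, 1] [16, 25, 34, 135] [1, 4, 6, 16, 17])) (.split 26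
  (.wit [0, 1] [15, 23, 46, 136] [1, 4, 5, 15, 17])
  (.wit [0, 1] [12, 34, 56, 135, 236] [1, 4, 17, 25]))))
  (.wit [0, 1] [12, 34, 56, 135, 167] [1, 2, 4, 12, 17, 36]))) (.split 16 (.split 47 (.need 26
  (.split 45 (.wit [0, 1] [12, 34, 56, 135] [1, 2, 6, 12, 17]) (.need 36 (.split 23 (.need 24
  (.wit [0, 1] [12, 36, 45, 134, 246] [1, 5, 15, 17])) (.split 25
  (.wit [0, 1] [12, 34, 56, 135, 236] [1, 4, 14, 17])
  (.wit [0, 1] [12, 34, 56, 145, 235] [1, 6, 17, 24]))))))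
  (.wit [0, 1] [12, 34, 56, 135, 147] [1, 2, 6, 12, 17, 45]))
  (.wit [0, 1] [12, 34, 56, 135, 146] [1, 2, 12, 17, 36, 45])))))))))

/-- Two vertices of degree five with three common neighbors, one of which sees nothing else. -/
def twoLeavesCert : Cert :=
  .split 28 (.need 23 (.need 24 (.split 26 (.need 25 (.need 27 (.split 57
  (.wit [2] [25, 127] [23, 24]) (.split 37 (.wit [2] [23, 124, 257] [12, 24, 25])
  (.wit [1, 2] [124, 23, 137, 257] [12, 14, 18, 24, 25]))))) (.split 45 (.need 46 (.need 25
  (.need 56 (.wit [0, 2] [23, 46, 124, 256] [2, 3, 12, 23, 27])))) (.split 25 (.need 27 (.split 67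
  (.wit [0, 2] [23, 45, 127] [3, 6, 23, 24]) (.wit [0, 2] [23, 45, 124, 267] [3, 6, 12, 23, 24])))
  (.split 56 (.need 27 (.split 57 (.split 67 (.wit [2] [23, 127, 245] [2, 23, 24])
  (.wit [0, 2] [23, 45, 124, 267] [2, 3, 23, 27, 46]))
  (.wit [0, 2] [23, 45, 124, 257] [2, 3, 23, 27, 46])))
  (.wit [0, 2] [23, 45, 124, 256] [2, 3, 23, 27, 46]))))))) (.split 23 (.need 24 (.need 27
  (.need 35 (.need 34 (.wit [0, 1] [24, 35, 127, 134] [5, 6, 17, 18]))))) (.split 27 (.need 37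
  (.need 24 (.split 45 (.need 46 (.split 26 (.wit [0, 1] [23, 46, 124, 137] [3, 5, 14, 18])
  (.need 56 (.wit [0, 1, 2] [23, 128, 56, 137, 246] [2, 3, 12, 14, 18, 23, 28])))) (.split 25
  (.wit [0, 1] [23, 45, 124, 137] [3, 6, 14, 18]) (.split 26
  (.wit [1, 2] [128, 23, 137, 245] [2, 14, 18, 23, 28]) (.split 56 (.split 58 (.split 68
  (.wit [1, 2] [128, 23, 137, 245] [2, 14, 18, 23, 24])
  (.wit [0, 1, 2] [23, 124, 45, 137, 268] [2, 3, 4, 14, 18, 23, 24]))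
  (.wit [0, 1, 2] [23, 124, 45, 137, 258] [2, 3, 14, 18, 23, 28, 46]))
  (.wit [0, 1, 2] [23, 124, 45, 137, 256] [2, 3, 14, 18, 23, 28, 46]))))))) (.split 56 (.need 45
  (.need 26 (.need 25 (.split 68 (.need 35 (.split 34
  (.wit [0, 2] [26, 45, 128, 235] [6, 23, 24, 25, 27])
  (.wit [0, 1, 2] [26, 127, 45, 134, 235] [6, 17, 18, 23, 24, 25, 27]))) (.split 24 (.need 34
  (.wit [0, 1, 2] [23, 127, 45, 134, 268] [3, 6, 17, 18, 23, 25, 27])) (.split 57 (.split 67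
  (.wit [2] [23, 127, 245, 268] [2, 23, 24, 28]) (.split 58 (.need 46
  (.wit [0, 2] [23, 46, 127, 245, 268] [2, 3, 12, 23, 24, 27]))
  (.wit [0, 2] [23, 45, 124, 258, 267] [2, 3, 23, 27, 28, 46])))
  (.wit [0, 2] [23, 45, 124, 257, 268] [2, 3, 23, 27, 28, 46]))))))) (.split 24 (.need 34
  (.wit [0, 1] [23, 56, 127, 134] [5, 6, 17, 18])) (.split 37 (.need 38 (.need 78
  (.wit [0, 1, 2] [23, 124, 56, 138, 278] [3, 4, 12, 14, 24, 25, 26]))) (.split 78 (.split 34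
  (.wit [0, 1] [23, 56, 124, 137] [5, 6, 17, 18]) (.split 26
  (.wit [0, 1, 2] [24, 128, 56, 134, 237] [3, 4, 12, 18, 25, 28, 47]) (.split 25
  (.wit [0, 1, 2] [24, 128, 56, 134, 237] [3, 4, 12, 18, 26, 28, 47])
  (.wit [1, 2] [128, 24, 134, 237, 256] [17, 18, 23, 24, 25, 26])))) (.split 25
  (.wit [0, 1, 2] [23, 124, 56, 137, 278] [3, 4, 12, 14, 24, 26, 38]) (.split 26
  (.wit [0, 1, 2] [23, 124, 56, 137, 278] [3, 4, 12, 14, 24, 25, 38])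
  (.wit [1, 2] [124, 23, 137, 256, 278] [12, 14, 24, 25, 26, 38])))))))))

/-- Three vertices of degree five covering six vertices, and a common neighbor. -/
def threeLeavesCert : Cert :=
  .split 56 (.need 67 (.need 36 (.need 35 (.need 45 (.need 57 (.need 46 (.split 47 (.need 34
  (.need 37 (.wit [0] [45, 67, 346, 357] []))) (.split 37 (.need 34
  (.wit [0] [35, 67, 346, 457] [])) (.split 34 (.wit [0] [35, 46, 367, 457] []) (.split 59
  (.need 49 (.wit [0, 1] [36, 45, 135, 149] [4, 7, 13, 18]))
  (.wit [0, 1] [35, 46, 134, 159, 367, 457] [18, 19]))))))))))) (.split 45 (.need 48 (.need 34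
  (.need 35 (.wit [0, 1] [34, 56, 135, 148] [6, 7, 18, 19])))) (.split 39 (.need 35 (.need 89
  (.need 36 (.need 38 (.wit [1, 2] [138, 145, 236, 289] [14, 15, 26, 27]))))) (.split 38 (.need 37
  (.need 89 (.wit [1, 2] [139, 145, 237, 289] [14, 15, 26, 27]))) (.split 46 (.need 36 (.need 34
  (.split 48 (.wit [0, 1] [34, 56, 138, 145] [3, 7, 15, 19]) (.split 49
  (.wit [0, 1] [34, 56, 139, 145] [3, 7, 15, 18]) (.split 35
  (.wit [0, 1] [34, 56, 138, 145] [3, 7, 18, 19]) (.split 59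
  (.wit [0, 1] [36, 45, 135, 148, 349] [5, 7, 18]) (.split 37 (.need 67
  (.wit [0, 1, 2] [34, 56, 135, 148, 239, 267, 459] [7, 18, 28, 29, 36]))
  (.wit [0, 1] [37, 45, 134, 159, 356] [7, 18, 19])))))))) (.split 57 (.need 67 (.need 47
  (.need 37 (.split 78 (.wit [0, 2] [37, 56, 238, 267] [3, 4, 26, 29]) (.split 36
  (.wit [0, 2] [37, 45, 238, 267] [4, 5, 28, 29]) (.need 35
  (.wit [0, 2] [37, 45, 238, 267, 356] [4, 28, 29]))))))) (.split 68 (.need 89 (.need 69 (.need 78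
  (.need 36 (.split 37 (.need 35
  (.wit [0, 1, 2] [36, 57, 135, 189, 238, 269] [4, 6, 14, 15, 27, 39]))
  (.wit [1, 2] [138, 145, 237, 289, 369] [14, 15, 27])))))) (.split 89
  (.wit [1, 2] [138, 145, 239, 268] [14, 15, 26, 27]) (.split 49 (.need 59 (.need 48 (.need 34
  (.wit [1, 2] [145, 189, 239, 268, 348] [15, 26, 27])))) (.split 35 (.need 34
  (.wit [0, 1] [34, 56, 138, 145] [6, 7, 18, 19])) (.split 34
  (.wit [0, 1] [35, 46, 138, 145] [6, 7, 18, 19]) (.split 36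
  (.wit [0, 1] [34, 57, 135, 149, 456] [7, 18, 19]) (.split 48
  (.wit [0, 1, 2] [35, 46, 138, 145, 236, 289, 349] [5, 7, 15, 26, 27]) (.split 69
  (.wit [0, 1, 2] [34, 56, 138, 149, 236, 289, 468] [5, 7, 15, 27, 39])
  (.wit [0, 1, 2] [36, 45, 135, 189, 238, 269, 349, 468] [5, 7, 15, 27]))))))))))))))

/-- A valid certificate excludes its configuration from a minimal counterexample. -/
theorem IsMinCounterexample.false_of_check (hG : IsMinCounterexample G) (n : ℕ) (x : V) (l : List V)
    (C D P A : List ℕ) (t : Cert)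
    (ht : t.check n C D (mask P) (mask A) = true) (hlen : l.length + 1 = n) (hn : n ≤ 10)
    (hl : (x :: l).Nodup)
    (hC : ∀ i ∈ C, i < n ∧ ∀ v, G.Adj ((x :: l).getD i x) v → v ∈ x :: l)
    (hD : ∀ i ∈ D, i < n ∧ NoCherry G ((x :: l).getD i x))
    (hP : ∀ c ∈ P, CodeAdj G (fun i => (x :: l).getD i x) c)
    (hA : ∀ c ∈ A, ¬ CodeAdj G (fun i => (x :: l).getD i x) c) : False := by
  have hf : IsConfig G (fun i => (x :: l).getD i x) n C D := by
    refine ⟨hn, fun i hi j hj h => ?_, fun i hi => ?_, fun i hi => ?_⟩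
    · rw [← hlen, ← List.length_cons (a := x)] at hi hj
      rw [List.getD_eq_getElem _ _ hi, List.getD_eq_getElem _ _ hj] at h
      exact (List.Nodup.getElem_inj_iff hl).1 h
    · refine ⟨(hC i hi).1, fun v hv => ?_⟩
      obtain ⟨j, hj, rfl⟩ := List.getElem_of_mem ((hC i hi).2 v hv)
      exact ⟨j, hlen ▸ hj, List.getD_eq_getElem _ _ hj⟩
    · exact hD i hi
  rw [hf.check_sound hG t (fun c hc => hP c (testBit_mask.1 hc))
    fun c hc => hA c (testBit_mask.1 hc)] at ht
  exact Bool.false_ne_true ht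

end Certificate

section Local

set_option linter.unusedSimpArgs false

variable {G : SimpleGraph V} {x y : V}

theorem IsMinCounterexample.false_of_nonadj_lists (hG : IsMinCounterexample G) {I J K : List V}
    (hx : NoCherry G x) (hy : NoCherry G y) (hxy : ¬ G.Adj x y)
    (hnd : (x :: y :: (I ++ J ++ K)).Nodup) (hxI : ∀ v ∈ I, G.Adj x v) (hyI : ∀ v ∈ I, G.Adj y v)
    (hxJ : ∀ v ∈ J, G.Adj x v) (hyJ : ∀ v ∈ J, ¬ G.Adj y v) (hxK : ∀ v ∈ K, ¬ G.Adj x v)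
    (hyK : ∀ v ∈ K, G.Adj y v) (hxN : ∀ v, G.Adj x v → v ∈ x :: y :: (I ++ J ++ K))
    (hyN : ∀ v, G.Adj y v → v ∈ x :: y :: (I ++ J ++ K))
    (hlen : I.length = 4 ∧ J.length = 1 ∧ K.length = 1 ∨
      I.length = 5 ∧ J.length = 0 ∧ K.length = 0 ∨
      I.length = 4 ∧ J.length = 1 ∧ K.length = 2 ∨
      I.length = 5 ∧ J.length = 0 ∧ K.length = 1 ∨
      I.length = 5 ∧ J.length = 1 ∧ K.length = 1 ∨
      I.length = 6 ∧ J.length = 0 ∧ K.length = 0) : False := by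
  rcases hlen with ⟨hI, hJ, hK⟩ | ⟨hI, hJ, hK⟩ | ⟨hI, hJ, hK⟩ | ⟨hI, hJ, hK⟩ | ⟨hI, hJ, hK⟩ | ⟨hI, hJ, hK⟩
  · match I, J, K, hI, hJ, hK with
    | [a, b, c, d], [e], [f], _, _, _ =>
      refine hG.false_of_check 8 x [y, a, b, c, d, e, f] [0, 1] [0, 1]
        [2, 3, 4, 5, 6, 12, 13, 14, 15, 17] [1, 7, 16] nonadjFiveFiveFourCert
        (by decide +kernel) rfl (by simp) hnd ?_ (by simp [hx, hy]) ?_ ?_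
      · simpa using And.intro hxN hyN
      · simp [CodeAdj, hxI, hyI, hxJ, hyK]
      · simp [CodeAdj, hxy, hyJ, hxK]
  · match I, J, K, hI, hJ, hK with
    | [a, b, c, d, e], [], [], _, _, _ =>
      refine hG.false_of_check 7 x [y, a, b, c, d, e] [0, 1] [0, 1]
        [2, 3, 4, 5, 6, 12, 13, 14, 15, 16] [1] nonadjFiveFiveFiveCert
        (by decide +kernel) rfl (by simp) hnd ?_ (by simp [hx, hy]) ?_ ?_
      · simpa using And.intro hxN hyN
      · simp [CodeAdj, hxI, hyI, hxJ, hyK]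
      · simp [CodeAdj, hxy, hyJ, hxK]
  · match I, J, K, hI, hJ, hK with
    | [a, b, c, d], [e], [f, g], _, _, _ =>
      refine hG.false_of_check 9 x [y, a, b, c, d, e, f, g] [0, 1] [0, 1]
        [2, 3, 4, 5, 6, 12, 13, 14, 15, 17, 18] [1, 7, 8, 16] nonadjFiveSixFourCert
        (by decide +kernel) rfl (by simp) hnd ?_ (by simp [hx, hy]) ?_ ?_
      · simpa using And.intro hxN hyN
      · simp [CodeAdj, hxI, hyI, hxJ, hyK]
      · simp [CodeAdj, hxy, hyJ, hxK]
  · match I, J, K, hI, hJ, hK with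
    | [a, b, c, d, e], [], [f], _, _, _ =>
      refine hG.false_of_check 8 x [y, a, b, c, d, e, f] [0, 1] [0, 1]
        [2, 3, 4, 5, 6, 12, 13, 14, 15, 16, 17] [1, 7] nonadjFiveSixFiveCert
        (by decide +kernel) rfl (by simp) hnd ?_ (by simp [hx, hy]) ?_ ?_
      · simpa using And.intro hxN hyN
      · simp [CodeAdj, hxI, hyI, hxJ, hyK]
      · simp [CodeAdj, hxy, hyJ, hxK]
  · match I, J, K, hI, hJ, hK with
    | [a, b, c, d, e], [f], [g], _, _, _ =>
      refine hG.false_of_check 9 x [y, a, b, c, d, e, f, g] [0, 1] [0, 1]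
        [2, 3, 4, 5, 6, 7, 12, 13, 14, 15, 16, 18] [1, 8, 17] nonadjSixSixFiveCert
        (by decide +kernel) rfl (by simp) hnd ?_ (by simp [hx, hy]) ?_ ?_
      · simpa using And.intro hxN hyN
      · simp [CodeAdj, hxI, hyI, hxJ, hyK]
      · simp [CodeAdj, hxy, hyJ, hxK]
  · match I, J, K, hI, hJ, hK with
    | [a, b, c, d, e, f], [], [], _, _, _ =>
      refine hG.false_of_check 8 x [y, a, b, c, d, e, f] [0, 1] [0, 1]
        [2, 3, 4, 5, 6, 7, 12, 13, 14, 15, 16, 17] [1] nonadjSixSixSixCert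
        (by decide +kernel) rfl (by simp) hnd ?_ (by simp [hx, hy]) ?_ ?_
      · simpa using And.intro hxN hyN
      · simp [CodeAdj, hxI, hyI, hxJ, hyK]
      · simp [CodeAdj, hxy, hyJ, hxK]

theorem IsMinCounterexample.false_of_cherry_lists (hG : IsMinCounterexample G) {u v w z : V}
    {R : List V} (hnd : (x :: u :: v :: w :: z :: R).Nodup) (hxu : G.Adj x u) (hxv : G.Adj x v)
    (hxw : G.Adj x w) (hxz : G.Adj x z) (huz : G.Adj u z) (huv : ¬ G.Adj u v) (huw : ¬ G.Adj u w)
    (hxR : ∀ a ∈ R, G.Adj x a) (hxN : ∀ a, G.Adj x a → a ∈ x :: u :: v :: w :: z :: R)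
    (hlen : R.length = 0 ∨ R.length = 1 ∨ R.length = 2) : False := by
  rcases hlen with hR | hR | hR
  · match R, hR with
    | [], _ =>
      refine hG.false_of_check 5 x [u, v, w, z] [0] []
        [1, 2, 3, 4, 14] [12, 13] cherryFourCert
        (by decide +kernel) rfl (by simp) hnd (by simpa using hxN) (by simp) ?_ ?_
      · simp [CodeAdj, hxu, hxv, hxw, hxz, huz, hxR]
      · simp [CodeAdj, huv, huw]
  · match R, hR with
    | [a], _ =>
      refine hG.false_of_check 6 x [u, v, w, z, a] [0] []
        [1, 2, 3, 4, 5, 14] [12, 13] cherryFiveCert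
        (by decide +kernel) rfl (by simp) hnd (by simpa using hxN) (by simp) ?_ ?_
      · simp [CodeAdj, hxu, hxv, hxw, hxz, huz, hxR]
      · simp [CodeAdj, huv, huw]
  · match R, hR with
    | [a, b], _ =>
      refine hG.false_of_check 7 x [u, v, w, z, a, b] [0] []
        [1, 2, 3, 4, 5, 6, 14] [12, 13] cherrySixCert
        (by decide +kernel) rfl (by simp) hnd (by simpa using hxN) (by simp) ?_ ?_
      · simp [CodeAdj, hxu, hxv, hxw, hxz, huz, hxR]
      · simp [CodeAdj, huv, huw]

theorem IsMinCounterexample.false_of_degree_lists (hG : IsMinCounterexample G) {R : List V}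
    (hx : NoCherry G x) (hnd : (x :: R).Nodup) (hxR : ∀ a ∈ R, G.Adj x a)
    (hxN : ∀ a, G.Adj x a → a ∈ x :: R)
    (hlen : R.length = 1 ∨ R.length = 2 ∨ R.length = 3 ∨ R.length = 4) : False := by
  rcases hlen with hR | hR | hR | hR
  · match R, hR with
    | [a], _ =>
      exact hG.false_of_check 2 x [a] [0] [0] [1] [] degreeOneCert
        (by decide +kernel) rfl (by simp) hnd (by simpa using hxN) (by simpa using hx)
        (by simp [CodeAdj, hxR]) (by simp)
  · match R, hR with
    | [a, b], _ =>
      exact hG.false_of_check 3 x [a, b] [0] [0] [1, 2] [] degreeTwoCert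
        (by decide +kernel) rfl (by simp) hnd (by simpa using hxN) (by simpa using hx)
        (by simp [CodeAdj, hxR]) (by simp)
  · match R, hR with
    | [a, b, c], _ =>
      exact hG.false_of_check 4 x [a, b, c] [0] [0] [1, 2, 3] [] degreeThreeCert
        (by decide +kernel) rfl (by simp) hnd (by simpa using hxN) (by simpa using hx)
        (by simp [CodeAdj, hxR]) (by simp)
  · match R, hR with
    | [a, b, c, d], _ =>
      exact hG.false_of_check 5 x [a, b, c, d] [0] [0] [1, 2, 3, 4] [] degreeFourCert
        (by decide +kernel) rfl (by simp) hnd (by simpa using hxN) (by simpa using hx)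
        (by simp [CodeAdj, hxR]) (by simp)

theorem IsMinCounterexample.false_of_adj_lists (hG : IsMinCounterexample G) {R E : List V}
    (hx : NoCherry G x) (hxy : G.Adj x y) (hnd : (x :: y :: (R ++ E)).Nodup)
    (hxR : ∀ a ∈ R, G.Adj x a) (hxE : ∀ a ∈ E, ¬ G.Adj x a) (hyE : ∀ a ∈ E, G.Adj y a)
    (hxN : ∀ a, G.Adj x a → a ∈ x :: y :: (R ++ E)) (hyN : ∀ a, G.Adj y a → a ∈ x :: y :: (R ++ E))
    (hlen : R.length = 4 ∧ E.length = 0 ∨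
      R.length = 4 ∧ E.length = 1 ∨
      R.length = 4 ∧ E.length = 2 ∨
      R.length = 5 ∧ E.length = 0 ∨
      R.length = 5 ∧ E.length = 1) : False := by
  rcases hlen with ⟨hR, hE⟩ | ⟨hR, hE⟩ | ⟨hR, hE⟩ | ⟨hR, hE⟩ | ⟨hR, hE⟩
  · match R, E, hR, hE with
    | [a, b, c, d], [], _, _ =>
      exact hG.false_of_check 6 x [y, a, b, c, d] [0, 1] [0]
        [1, 2, 3, 4, 5] [] adjFiveZeroCert
        (by decide +kernel) rfl (by simp) hnd (by simpa using And.intro hxN hyN)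
        (by simpa using hx) (by simp [CodeAdj, hxy, hxR, hyE]) (by simp [CodeAdj, hxE])
  · match R, E, hR, hE with
    | [a, b, c, d], [e], _, _ =>
      exact hG.false_of_check 7 x [y, a, b, c, d, e] [0, 1] [0]
        [1, 2, 3, 4, 5, 16] [6] adjFiveOneCert
        (by decide +kernel) rfl (by simp) hnd (by simpa using And.intro hxN hyN)
        (by simpa using hx) (by simp [CodeAdj, hxy, hxR, hyE]) (by simp [CodeAdj, hxE])
  · match R, E, hR, hE with
    | [a, b, c, d], [e, f], _, _ =>
      exact hG.false_of_check 8 x [y, a, b, c, d, e, f] [0, 1] [0]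
        [1, 2, 3, 4, 5, 16, 17] [6, 7] adjFiveTwoCert
        (by decide +kernel) rfl (by simp) hnd (by simpa using And.intro hxN hyN)
        (by simpa using hx) (by simp [CodeAdj, hxy, hxR, hyE]) (by simp [CodeAdj, hxE])
  · match R, E, hR, hE with
    | [a, b, c, d, e], [], _, _ =>
      exact hG.false_of_check 7 x [y, a, b, c, d, e] [0, 1] [0]
        [1, 2, 3, 4, 5, 6] [] adjSixZeroCert
        (by decide +kernel) rfl (by simp) hnd (by simpa using And.intro hxN hyN)
        (by simpa using hx) (by simp [CodeAdj, hxy, hxR, hyE]) (by simp [CodeAdj, hxE])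
  · match R, E, hR, hE with
    | [a, b, c, d, e], [f], _, _ =>
      exact hG.false_of_check 8 x [y, a, b, c, d, e, f] [0, 1] [0]
        [1, 2, 3, 4, 5, 6, 17] [7] adjSixOneCert
        (by decide +kernel) rfl (by simp) hnd (by simpa using And.intro hxN hyN)
        (by simpa using hx) (by simp [CodeAdj, hxy, hxR, hyE]) (by simp [CodeAdj, hxE])

theorem IsMinCounterexample.false_of_two_leaves_lists (hG : IsMinCounterexample G) {w : V}
    {I J K : List V} (hx : NoCherry G x) (hy : NoCherry G y) (hxy : ¬ G.Adj x y)
    (hxw : G.Adj x w) (hyw : G.Adj y w) (hnd : (x :: y :: w :: (I ++ J ++ K)).Nodup)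
    (hxI : ∀ v ∈ I, G.Adj x v) (hyI : ∀ v ∈ I, G.Adj y v) (hxJ : ∀ v ∈ J, G.Adj x v)
    (hyJ : ∀ v ∈ J, ¬ G.Adj y v) (hxK : ∀ v ∈ K, ¬ G.Adj x v) (hyK : ∀ v ∈ K, G.Adj y v)
    (hxN : ∀ v, G.Adj x v → v ∈ x :: y :: w :: (I ++ J ++ K))
    (hyN : ∀ v, G.Adj y v → v ∈ x :: y :: w :: (I ++ J ++ K))
    (hwN : ∀ v, G.Adj w v → v ∈ x :: y :: w :: (I ++ J ++ K))
    (hI : I.length = 2) (hJ : J.length = 2) (hK : K.length = 2) : False := by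
  match I, J, K, hI, hJ, hK with
  | [a, b], [c, d], [e, f], _, _, _ =>
    refine hG.false_of_check 9 x [y, w, a, b, c, d, e, f] [0, 1, 2] [0, 1]
      [2, 3, 4, 5, 6, 12, 13, 14, 17, 18] [1, 7, 8, 15, 16] twoLeavesCert
      (by decide +kernel) rfl (by simp) hnd ?_ (by simp [hx, hy]) ?_ ?_
    · simpa using And.intro hxN (And.intro hyN hwN)
    · simp [CodeAdj, hxw, hyw, hxI, hyI, hxJ, hyK]
    · simp [CodeAdj, hxy, hyJ, hxK]

theorem IsMinCounterexample.false_of_three_leaves_lists (hG : IsMinCounterexample G) {z w : V}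
    {I J K : List V} (hx : NoCherry G x) (hy : NoCherry G y) (hz : NoCherry G z)
    (hxy : ¬ G.Adj x y) (hxz : ¬ G.Adj x z) (hyz : ¬ G.Adj y z)
    (hxw : G.Adj x w) (hyw : G.Adj y w) (hzw : G.Adj z w)
    (hnd : (x :: y :: z :: w :: (I ++ J ++ K)).Nodup)
    (hxI : ∀ v ∈ I, G.Adj x v) (hyI : ∀ v ∈ I, G.Adj y v) (hzI : ∀ v ∈ I, ¬ G.Adj z v)
    (hxJ : ∀ v ∈ J, G.Adj x v) (hyJ : ∀ v ∈ J, ¬ G.Adj y v) (hzJ : ∀ v ∈ J, G.Adj z v)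
    (hxK : ∀ v ∈ K, ¬ G.Adj x v) (hyK : ∀ v ∈ K, G.Adj y v) (hzK : ∀ v ∈ K, G.Adj z v)
    (hxN : ∀ v, G.Adj x v → v ∈ x :: y :: z :: w :: (I ++ J ++ K))
    (hyN : ∀ v, G.Adj y v → v ∈ x :: y :: z :: w :: (I ++ J ++ K))
    (hzN : ∀ v, G.Adj z v → v ∈ x :: y :: z :: w :: (I ++ J ++ K))
    (hI : I.length = 2) (hJ : J.length = 2) (hK : K.length = 2) : False := by
  match I, J, K, hI, hJ, hK with
  | [a, b], [c, d], [e, f], _, _, _ =>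
    refine hG.false_of_check 10 x [y, z, w, a, b, c, d, e, f] [0, 1, 2] [0, 1, 2]
      [3, 4, 5, 6, 7, 13, 14, 15, 18, 19, 23, 26, 27, 28, 29] [1, 2, 8, 9, 12, 16, 17, 24, 25] threeLeavesCert
      (by decide +kernel) rfl (by simp) hnd ?_ (by simp [hx, hy, hz]) ?_ ?_
    · simpa using And.intro hxN (And.intro hyN hzN)
    · simp [CodeAdj, hxw, hyw, hzw, hxI, hyI, hxJ, hzJ, hyK, hzK]
    · simp [CodeAdj, hxy, hxz, hyz, hzI, hyJ, hxK]

/-- Three sets of five elements with pairwise intersections of size three and a common element `w`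
inside a set of seven elements: the third set is determined by the other two. -/
theorem mem_iff_of_card_inter_eq_three [DecidableEq V] {X Y Z : Finset V} {w : V} (hX : X.card = 5)
    (hY : Y.card = 5) (hZ : Z.card = 5) (hXY : (X ∩ Y).card = 3) (hXZ : (X ∩ Z).card = 3)
    (hcard : (X ∪ Y ∪ Z).card ≤ 7) (hwX : w ∈ X) (hwY : w ∈ Y) (hwZ : w ∈ Z)
    (hYZ : (Y ∩ Z).card = 3) (v : V) : v ∈ Z ↔ v = w ∨ v ∈ X ∧ v ∉ Y ∨ v ∈ Y ∧ v ∉ X := by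
  have hsub : ∀ {s t : Finset V}, (s ∩ t).card = 3 → t.card = 5 → (t \ s).card = 2 := by
    intro s t h h'
    have := Finset.card_sdiff_add_card_inter t s
    rw [Finset.inter_comm] at this
    omega
  have hJ : (X \ Y).card = 2 := hsub (by rwa [Finset.inter_comm]) hX
  have hunion := Finset.card_union_add_card_inter X Y
  have hZXY : Z ⊆ X ∪ Y :=
    Finset.union_eq_left.1 (Finset.eq_of_subset_of_card_le Finset.subset_union_left (by omega)).symm
  have hZX : Z \ X = Y \ X := by
    refine Finset.eq_of_subset_of_card_le (fun u hu => ?_) (by rw [hsub hXY hY, hsub hXZ hZ])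
    rw [Finset.mem_sdiff] at hu ⊢
    exact ⟨(Finset.mem_union.1 (hZXY hu.1)).resolve_left hu.2, hu.2⟩
  have hZY : Z \ Y = X \ Y := by
    refine Finset.eq_of_subset_of_card_le (fun u hu => ?_) (by rw [hJ, hsub hYZ hZ])
    rw [Finset.mem_sdiff] at hu ⊢
    exact ⟨(Finset.mem_union.1 (hZXY hu.1)).resolve_right hu.2, hu.2⟩
  have hXZ' : insert w (X \ Y) = X ∩ Z := by
    refine Finset.eq_of_subset_of_card_le ?_ ?_
    · refine Finset.insert_subset (Finset.mem_inter.2 ⟨hwX, hwZ⟩) ?_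
      rw [← hZY]
      exact fun u hu => Finset.mem_inter.2
        ⟨(Finset.mem_sdiff.1 (hZY ▸ hu)).1, (Finset.mem_sdiff.1 hu).1⟩
    · rw [hXZ, Finset.card_insert_of_notMem (by simp [hwY]), hJ]
  have h1 := Finset.ext_iff.1 hZX v
  have h2 := Finset.ext_iff.1 hXZ' v
  simp only [Finset.mem_sdiff, Finset.mem_insert, Finset.mem_inter] at h1 h2
  by_cases hv : v = w
  · simp [hv, hwZ]
  · clear hZX hZY hXZ' hZXY hsub
    by_cases v ∈ X <;> simp_all

variable [Fintype V] [DecidableEq V] [DecidableRel G.Adj]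

theorem IsMinCounterexample.noCherry (hG : IsMinCounterexample G) (hx : G.degree x ≤ 6) :
    NoCherry G x := by
  intro u v w hxu hxv hxw huv huw hvw nuv nuw
  obtain ⟨z, hxz, huz⟩ := hG.exists_common_neighbor hxu
  have hvz : v ≠ z := by rintro rfl; exact nuv huz
  have hwz : w ≠ z := by rintro rfl; exact nuw huz
  have hsub : ({u, v, w, z} : Finset V) ⊆ G.neighborFinset x := by
    intro a
    simp only [Finset.mem_insert, Finset.mem_singleton, mem_neighborFinset]
    rintro (rfl | rfl | rfl | rfl) <;> assumption
  have hcard : ({u, v, w, z} : Finset V).card = 4 := by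
    rw [Finset.card_insert_of_notMem, Finset.card_insert_of_notMem, Finset.card_pair hwz] <;>
      simp [huv, huw, hvw, huz.ne, hvz]
  have hle := Finset.card_le_card hsub
  have hR := Finset.card_sdiff_of_subset hsub
  rw [card_neighborFinset_eq_degree] at hR hle
  refine hG.false_of_cherry_lists (R := (G.neighborFinset x \ {u, v, w, z}).toList) ?_
    hxu hxv hxw hxz huz nuv nuw ?_ ?_ ?_
  · have := hxu.ne
    have := hxv.ne
    have := hxw.ne
    have := hxz.ne
    have := huz.ne
    simp [Finset.nodup_toList, *]
  · simp +contextual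
  · intro a ha
    simp only [List.mem_cons, Finset.mem_toList, Finset.mem_sdiff, mem_neighborFinset, ha,
      Finset.mem_insert, Finset.mem_singleton]
    tauto
  · simp only [Finset.length_toList]
    omega

theorem IsMinCounterexample.five_le_degree (hG : IsMinCounterexample G) (hxy : G.Adj x y)
    (hx : G.degree x ≤ 6) : 5 ≤ G.degree x := by
  by_contra! hlt
  have hpos : 0 < G.degree x := (G.degree_pos_iff_exists_adj x).2 ⟨y, hxy⟩
  refine hG.false_of_degree_lists (R := (G.neighborFinset x).toList) (hG.noCherry hx) ?_ ?_ ?_ ?_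
  · simp [Finset.nodup_toList]
  · simp
  · simp +contextual
  · simp only [Finset.length_toList, card_neighborFinset_eq_degree]
    omega

theorem IsMinCounterexample.degrees_of_not_adj (hG : IsMinCounterexample G) (hne : x ≠ y)
    (hxy : ¬ G.Adj x y) (hx : 5 ≤ G.degree x) (hx' : G.degree x ≤ 6) (hy : 5 ≤ G.degree y)
    (hy' : G.degree y ≤ 6) (hcard : (G.neighborFinset x ∪ G.neighborFinset y).card ≤ 7) :
    G.degree x = 5 ∧ G.degree y = 5 ∧ (G.neighborFinset x ∩ G.neighborFinset y).card = 3 := by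
  wlog hle : G.degree x ≤ G.degree y generalizing x y
  · obtain ⟨h1, h2, h3⟩ := this hne.symm (fun h => hxy h.symm) hy hy' hx hx'
      (by rwa [Finset.union_comm]) (by omega)
    exact ⟨h2, h1, by rwa [Finset.inter_comm]⟩
  have h1 := Finset.card_union_add_card_inter (G.neighborFinset x) (G.neighborFinset y)
  have h2 := Finset.card_sdiff_add_card_inter (G.neighborFinset x) (G.neighborFinset y)
  have h3 := Finset.card_sdiff_add_card_inter (G.neighborFinset y) (G.neighborFinset x)
  rw [Finset.inter_comm] at h3
  simp only [card_neighborFinset_eq_degree] at h1 h2 h3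
  by_contra hnot
  refine hG.false_of_nonadj_lists (I := (G.neighborFinset x ∩ G.neighborFinset y).toList)
    (J := (G.neighborFinset x \ G.neighborFinset y).toList)
    (K := (G.neighborFinset y \ G.neighborFinset x).toList)
    (hG.noCherry hx') (hG.noCherry hy') hxy ?_ ?_ ?_ ?_ ?_ ?_ ?_ ?_ ?_ ?_
  · have hyx : ¬ G.Adj y x := fun h => hxy h.symm
    simp only [List.nodup_cons, List.nodup_append, List.mem_cons, List.mem_append,
      Finset.nodup_toList, Finset.mem_toList, Finset.mem_inter, Finset.mem_sdiff,
      mem_neighborFinset]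
    grind [SimpleGraph.irrefl]
  all_goals try (simp +contextual; done)
  · simp +contextual [em]
  · simp +contextual [Classical.em]
  · simp only [Finset.length_toList, Nat.eq_sub_of_add_eq h2, Nat.eq_sub_of_add_eq h3]
    have hx6 : G.degree x = 5 ∨ G.degree x = 6 := by omega
    have hy6 : G.degree y = 5 ∨ G.degree y = 6 := by omega
    obtain hi | hi | hi : (G.neighborFinset x ∩ G.neighborFinset y).card = 4 ∨
        (G.neighborFinset x ∩ G.neighborFinset y).card = 5 ∨
        (G.neighborFinset x ∩ G.neighborFinset y).card = 6 := by omega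
    all_goals
      rcases hx6 with hx6 | hx6 <;> rcases hy6 with hy6 | hy6 <;>
        first
        | (exfalso; omega)
        | simp [hi, hx6, hy6]

theorem IsMinCounterexample.false_of_adj (hG : IsMinCounterexample G) (hxy : G.Adj x y)
    (hx : G.degree x ≤ 6) (hcard : (G.neighborFinset x ∪ G.neighborFinset y).card ≤ 8) :
    False := by
  have hx5 := hG.five_le_degree hxy hx
  have h1 := Finset.card_erase_of_mem ((G.mem_neighborFinset x y).2 hxy)
  have hmem : x ∈ G.neighborFinset y \ G.neighborFinset x := by simp [hxy.symm]
  have h2 := Finset.card_erase_of_mem hmem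
  have h3 := Finset.card_sdiff_add_card (G.neighborFinset y) (G.neighborFinset x)
  have h4 := Finset.card_pos.2 ⟨x, hmem⟩
  rw [Finset.union_comm] at hcard
  simp only [card_neighborFinset_eq_degree] at h1 h3
  refine hG.false_of_adj_lists (R := ((G.neighborFinset x).erase y).toList)
    (E := ((G.neighborFinset y \ G.neighborFinset x).erase x).toList) (hG.noCherry hx) hxy
    ?_ ?_ ?_ ?_ ?_ ?_ ?_
  · simp only [List.nodup_cons, List.nodup_append, List.mem_cons, List.mem_append,
      Finset.nodup_toList, Finset.mem_toList, Finset.mem_erase, Finset.mem_sdiff,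
      mem_neighborFinset]
    grind [SimpleGraph.irrefl]
  all_goals try (simp +contextual; done)
  · simp +contextual [em]
  · intro a ha
    simp only [List.mem_cons, List.mem_append, Finset.mem_toList, Finset.mem_erase,
      Finset.mem_sdiff, mem_neighborFinset, ha]
    tauto
  · simp only [Finset.length_toList]
    omega

theorem IsMinCounterexample.false_of_two_leaves (hG : IsMinCounterexample G) {w : V} (hne : x ≠ y)
    (hxy : ¬ G.Adj x y) (hxw : G.Adj x w) (hyw : G.Adj y w) (hx : G.degree x = 5)
    (hy : G.degree y = 5) (hcap : (G.neighborFinset x ∩ G.neighborFinset y).card = 3)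
    (hw : ∀ v, G.Adj w v → v = x ∨ v = y ∨ G.Adj x v ∨ G.Adj y v) : False := by
  have h1 := Finset.card_erase_of_mem (a := w) (s := G.neighborFinset x ∩ G.neighborFinset y)
    (by simp [hxw, hyw])
  have h2 := Finset.card_sdiff_add_card_inter (G.neighborFinset x) (G.neighborFinset y)
  have h3 := Finset.card_sdiff_add_card_inter (G.neighborFinset y) (G.neighborFinset x)
  rw [Finset.inter_comm] at h3
  simp only [card_neighborFinset_eq_degree] at h1 h2 h3
  have hyx : ¬ G.Adj y x := fun h => hxy h.symm
  refine hG.false_of_two_leaves_lists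
    (I := ((G.neighborFinset x ∩ G.neighborFinset y).erase w).toList)
    (J := (G.neighborFinset x \ G.neighborFinset y).toList)
    (K := (G.neighborFinset y \ G.neighborFinset x).toList)
    (hG.noCherry (by omega)) (hG.noCherry (by omega)) hxy hxw hyw ?_ ?_ ?_ ?_ ?_ ?_ ?_ ?_ ?_ ?_
    ?_ ?_ ?_
  · simp only [List.nodup_cons, List.nodup_append, List.mem_cons, List.mem_append,
      Finset.nodup_toList, Finset.mem_toList, Finset.mem_erase, Finset.mem_inter, Finset.mem_sdiff,
      mem_neighborFinset]
    grind [SimpleGraph.irrefl]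
  all_goals try (simp +contextual; done)
  iterate 3
    · intro a ha
      simp only [List.mem_cons, List.mem_append, Finset.mem_toList, Finset.mem_erase,
        Finset.mem_inter, Finset.mem_sdiff, mem_neighborFinset]
      grind
  all_goals
    simp only [Finset.length_toList]
    omega

theorem IsMinCounterexample.false_of_three_leaves (hG : IsMinCounterexample G) {z w : V}
    (hne : x ≠ y) (hne' : x ≠ z) (hne'' : y ≠ z)
    (hxy : ¬ G.Adj x y) (hxz : ¬ G.Adj x z) (hyz : ¬ G.Adj y z)
    (hxw : G.Adj x w) (hyw : G.Adj y w) (hzw : G.Adj z w) (hx : G.degree x = 5)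
    (hy : G.degree y = 5) (hz : G.degree z = 5)
    (hxy' : (G.neighborFinset x ∩ G.neighborFinset y).card = 3)
    (hxz' : (G.neighborFinset x ∩ G.neighborFinset z).card = 3)
    (hyz' : (G.neighborFinset y ∩ G.neighborFinset z).card = 3)
    (hcard : (G.neighborFinset x ∪ G.neighborFinset y ∪ G.neighborFinset z).card ≤ 7) : False := by
  have hyx : ¬ G.Adj y x := fun h => hxy h.symm
  have hz' : ∀ v, G.Adj z v ↔ v = w ∨ G.Adj x v ∧ ¬ G.Adj y v ∨ G.Adj y v ∧ ¬ G.Adj x v := by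
    simpa using mem_iff_of_card_inter_eq_three (w := w) (by simpa using hx) (by simpa using hy)
      (by simpa using hz) hxy' hxz' hcard (by simpa using hxw) (by simpa using hyw)
      (by simpa using hzw) hyz'
  have h1 := Finset.card_erase_of_mem (a := w) (s := G.neighborFinset x ∩ G.neighborFinset y)
    (by simp [hxw, hyw])
  have h2 := Finset.card_sdiff_add_card_inter (G.neighborFinset x) (G.neighborFinset y)
  have h3 := Finset.card_sdiff_add_card_inter (G.neighborFinset y) (G.neighborFinset x)
  rw [Finset.inter_comm] at h3
  simp only [card_neighborFinset_eq_degree] at h1 h2 h3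
  refine hG.false_of_three_leaves_lists
    (I := ((G.neighborFinset x ∩ G.neighborFinset y).erase w).toList)
    (J := (G.neighborFinset x \ G.neighborFinset y).toList)
    (K := (G.neighborFinset y \ G.neighborFinset x).toList)
    (hG.noCherry (by omega)) (hG.noCherry (by omega)) (hG.noCherry (by omega)) hxy hxz hyz
    hxw hyw hzw ?_ ?_ ?_ ?_ ?_ ?_ ?_ ?_ ?_ ?_ ?_ ?_ ?_ ?_ ?_ ?_
  · have := hxw.ne
    have := hyw.ne
    have := hzw.ne
    clear hcard hxy' hxz' hyz' h1 h2 h3 hx hy hz hz'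
    simp only [List.nodup_cons, List.nodup_append, List.mem_cons, List.mem_append,
      Finset.nodup_toList, Finset.mem_toList, Finset.mem_erase, Finset.mem_inter, Finset.mem_sdiff,
      mem_neighborFinset]
    grind [SimpleGraph.irrefl]
  iterate 9
    · simp +contextual [hz']
  iterate 3
    · clear hcard hxy' hxz' hyz' h1 h2 h3 hx hy hz hG
      intro v
      simp only [hz', List.mem_cons, List.mem_append, Finset.mem_toList,
        Finset.mem_erase, Finset.mem_inter, Finset.mem_sdiff, mem_neighborFinset]
      by_cases v = w <;> by_cases G.Adj x v <;> by_cases G.Adj y v <;> simp [*]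
  all_goals
    rw [Finset.length_toList]
    omega

end Local

section TreeDecomposition

theorem exists_path_of_subtree {α : Type*} {T : SimpleGraph α} (hT : T.Connected) {B : Set α}
    (hB : (T.induce B).Connected) {r s t : α} (hs : s ∈ B)
    (hmin : ∀ a ∈ B, T.dist s r ≤ T.dist a r) (ht : t ∈ B) :
    ∃ p : T.Walk t r, p.IsPath ∧ s ∈ p.support ∧
      ∀ a ∈ p.support, a ∈ B ∨ T.dist a r < T.dist s r := by
  classical
  obtain ⟨p, hp⟩ : ∃ p : T.Walk t s, p.IsPath ∧ ∀ a ∈ p.support, a ∈ B := by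
    obtain ⟨p, hp⟩ := (hB.preconnected ⟨t, ht⟩ ⟨s, hs⟩).exists_isPath
    refine ⟨p.map (Embedding.induce (G := T) B).toHom,
      hp.map (Embedding.induce (G := T) B).injective, fun a ha => ?_⟩
    have ha' : a ∈ p.support.map (Embedding.induce (G := T) B).toHom := by
      rw [← Walk.support_map]
      exact ha
    obtain ⟨b, -, rfl⟩ := List.mem_map.1 ha'
    exact b.2
  obtain ⟨q, hq, hqd⟩ := hT.exists_path_of_dist s r
  have hlt : ∀ a ∈ q.support, a = s ∨ T.dist a r < T.dist s r := by
    intro a ha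
    by_cases has : a = s
    · exact Or.inl has
    · right
      have h1 := congrArg Walk.length (q.take_spec ha)
      rw [Walk.length_append] at h1
      have h2 := dist_le (q.dropUntil a ha)
      have h3 : (q.takeUntil a ha).length ≠ 0 := fun h => has (Walk.eq_of_length_eq_zero h).symm
      omega
  have hstail : s ∉ q.support.tail := by
    have := hq.support_nodup
    rw [← Walk.cons_tail_support] at this
    exact (List.nodup_cons.1 this).1
  refine ⟨p.append q, ?_, ?_, fun a ha => ?_⟩
  · rw [Walk.isPath_def, Walk.support_append]
    refine List.Nodup.append hp.1.support_nodup hq.support_nodup.tail fun a hap haq => ?_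
    rcases hlt a (List.mem_of_mem_tail haq) with rfl | h
    · exact hstail haq
    · exact absurd h (not_lt.2 (hmin a (hp.2 a hap)))
  · simp
  · rcases (Walk.mem_support_append_iff _ _).1 ha with h | h
    · exact Or.inl (hp.2 a h)
    · rcases hlt a h with rfl | h
      exacts [Or.inl hs, Or.inr h]

/-- Among any nonempty set of vertices, one of them has all its neighbors, for the relation of
sharing a bag, in a single bag. -/
theorem exists_simplicial {G : SimpleGraph V} {α : Type} (D : TreeDecomp G α) {U : Finset V}
    (hU : U.Nonempty) :
    ∃ v ∈ U, ∃ t, v ∈ D.bag t ∧ ∀ u ∈ U, (∃ t', u ∈ D.bag t' ∧ v ∈ D.bag t') → u ∈ D.bag t := by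
  classical
  obtain ⟨r⟩ := D.isTree.connected.nonempty
  have htop : ∀ v, ∃ s, v ∈ D.bag s ∧ ∀ a, v ∈ D.bag a → D.T.dist s r ≤ D.T.dist a r := by
    intro v
    obtain ⟨t, ht⟩ := D.covers v
    exact ⟨_, Function.argminOn_mem (D.T.dist · r) {t | v ∈ D.bag t} ⟨t, ht⟩,
      fun a ha => Function.argminOn_le (D.T.dist · r) {t | v ∈ D.bag t} ha⟩
  choose top htop hmin using htop
  obtain ⟨v, hv, hvmax⟩ := U.exists_max_image (fun v => D.T.dist (top v) r) hU
  refine ⟨v, hv, top v, htop v, ?_⟩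
  rintro u hu ⟨t, hut, hvt⟩
  obtain ⟨p, hp, hpv, -⟩ := exists_path_of_subtree D.isTree.connected (D.subtree v) (htop v)
    (hmin v) hvt
  obtain ⟨q, hq, -, hqu⟩ := exists_path_of_subtree D.isTree.connected (D.subtree u) (htop u)
    (hmin u) hut
  have hpq : p = q := congrArg Subtype.val 
    ((D.isTree.isAcyclic.subsingleton_path t r).elim ⟨p, hp⟩ ⟨q, hq⟩)
  subst hpq
  exact (hqu _ hpv).resolve_right (not_lt.2 (hvmax u hu))

end TreeDecomposition

section Main

variable {G : SimpleGraph V}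

theorem IsMinCounterexample.exists_adj (hG : IsMinCounterexample G) : ∃ u v, G.Adj u v := by
  classical
  by_contra! hno
  refine hG.not_bound ⟨∅, ∅, ⟨by simp, fun t ht => ?_⟩, ⟨by simp, by simp⟩, by simp⟩
  obtain ⟨a, b, c, hab, -⟩ := is3Clique_iff.1 ht
  exact absurd hab (hno a b)

theorem IsMinCounterexample.false_of_treeDecomp [Fintype V] (hG : IsMinCounterexample G) {α : Type}
    (D : TreeDecomp G α) (hD : ∀ t, (D.bag t).card ≤ 7) : False := by
  classical
  let U : Finset V := Finset.univ.filter fun v => ∃ u, G.Adj v u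
  let Share : V → V → Prop := fun u v => ∃ t, u ∈ D.bag t ∧ v ∈ D.bag t
  let Leaf : V → Prop := fun v => v ∈ U ∧ ∃ t, v ∈ D.bag t ∧ ∀ u ∈ U, Share u v → u ∈ D.bag t
  have hmemU : ∀ {u v}, G.Adj u v → u ∈ U := fun h => Finset.mem_filter.2 ⟨Finset.mem_univ _, _, h⟩
  have hshare : ∀ {u v}, G.Adj u v → Share u v := fun h => D.edge_mem h
  have hsymm : ∀ {u v}, Share u v → Share v u := fun ⟨t, h, h'⟩ => ⟨t, h', h⟩
  have hdeg : ∀ x, Leaf x → G.degree x ≤ 6 := by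
    rintro x ⟨hx, t, hxt, ht⟩
    have hsub : G.neighborFinset x ⊆ (D.bag t).erase x := by
      intro u hu
      rw [mem_neighborFinset] at hu
      exact Finset.mem_erase.2 ⟨hu.ne', ht u (hmemU hu.symm) (hshare hu.symm)⟩
    have := Finset.card_le_card hsub
    rw [card_neighborFinset_eq_degree, Finset.card_erase_of_mem hxt] at this
    have := hD t
    omega
  have hdeg5 : ∀ x ∈ U, G.degree x ≤ 6 → 5 ≤ G.degree x := by
    intro x hx
    obtain ⟨u, hu⟩ := (Finset.mem_filter.1 hx).2
    exact hG.five_le_degree hu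
  -- Nonadjacent vertices of degree at most six have at least seven neighbors in total.
  have hunion : ∀ {x y}, x ∈ U → y ∈ U → x ≠ y → ¬ G.Adj x y → G.degree x ≤ 6 → G.degree y ≤ 6 →
      (G.neighborFinset x ∪ G.neighborFinset y).card ≤ 6 → False := by
    intro x y hx hy hne hxy hx6 hy6 hcard
    obtain ⟨h1, h2, h3⟩ := hG.degrees_of_not_adj hne hxy (hdeg5 x hx hx6) hx6 (hdeg5 y hy hy6) hy6
      (by omega)
    have := Finset.card_union_add_card_inter (G.neighborFinset x) (G.neighborFinset y)
    simp only [card_neighborFinset_eq_degree] at this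
    omega
  have hindep : ∀ x y, Leaf x → Leaf y → Share x y → x = y := by
    intro x y hx hy hxy
    by_contra hne
    obtain ⟨hxU, s, hxs, hs⟩ := id hx
    obtain ⟨hyU, t, hyt, ht⟩ := id hy
    have hys : y ∈ D.bag s := hs y hyU (hsymm hxy)
    have hxt : x ∈ D.bag t := ht x hxU hxy
    have hsub : G.neighborFinset x ∪ G.neighborFinset y ⊆ D.bag s := by
      refine Finset.union_subset (fun u hu => ?_) fun u hu => ?_
      · rw [mem_neighborFinset] at hu
        exact hs u (hmemU hu.symm) (hshare hu.symm)
      · rw [mem_neighborFinset] at hu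
        exact hs u (hmemU hu.symm) ⟨t, ht u (hmemU hu.symm) (hshare hu.symm), hxt⟩
    have hcard := hD s
    by_cases hadj : G.Adj x y
    · exact hG.false_of_adj hadj (hdeg x hx) (by have := Finset.card_le_card hsub; omega)
    · refine hunion hxU hyU hne hadj (hdeg x hx) (hdeg y hy) ?_
      have hsub' : G.neighborFinset x ∪ G.neighborFinset y ⊆ (D.bag s).erase x := by
        refine fun u hu => Finset.mem_erase.2 ⟨?_, hsub hu⟩
        rintro rfl
        rcases Finset.mem_union.1 hu with h | h
        · simp at h
        · exact hadj ((mem_neighborFinset G y u).1 h).symm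
      have := Finset.card_le_card hsub'
      rw [Finset.card_erase_of_mem hxs] at this
      omega
  obtain ⟨a, b, hab⟩ := hG.exists_adj
  obtain ⟨x₀, hx₀, hx₀'⟩ := exists_simplicial D ⟨a, hmemU hab⟩
  obtain ⟨w₀, hw₀⟩ := (Finset.mem_filter.1 hx₀).2
  obtain ⟨w, hw, t, hwt, ht⟩ := exists_simplicial D (U := U.filter fun v => ¬ Leaf v)
    ⟨w₀, Finset.mem_filter.2 ⟨hmemU hw₀.symm, fun h =>
      hw₀.ne (hindep x₀ w₀ ⟨hx₀, hx₀'⟩ h (hshare hw₀))⟩⟩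
  obtain ⟨hwU, hwL⟩ := Finset.mem_filter.1 hw
  let Q : Finset V := (D.bag t).filter fun v => ¬ Leaf v
  have hwQ : w ∈ Q := Finset.mem_filter.2 ⟨hwt, hwL⟩
  have hQ : Q.card ≤ 7 := (Finset.card_filter_le _ _).trans (hD t)
  have hleaf : ∀ {x}, Leaf x → Share x w → G.neighborFinset x ⊆ Q := by
    intro x hx hxw u hu
    rw [mem_neighborFinset] at hu
    have huL : ¬ Leaf u := fun h => hu.ne (hindep x u hx h (hshare hu))
    obtain ⟨-, s, -, hs⟩ := id hx
    exact Finset.mem_filter.2 ⟨ht u (Finset.mem_filter.2 ⟨hmemU hu.symm, huL⟩)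
      ⟨s, hs u (hmemU hu.symm) (hshare hu.symm), hs w hwU (hsymm hxw)⟩, huL⟩
  have hwN : ∀ u, G.Adj w u → u ∈ Q ∨ Leaf u := by
    intro u hu
    by_cases huL : Leaf u
    · exact Or.inr huL
    · exact Or.inl (Finset.mem_filter.2 ⟨ht u (Finset.mem_filter.2 ⟨hmemU hu.symm, huL⟩)
        (hshare hu.symm), huL⟩)
  have hpair : ∀ {x y}, Leaf x → Leaf y → x ≠ y → G.Adj x w → G.Adj y w →
      ¬ G.Adj x y ∧ G.degree x = 5 ∧ G.degree y = 5 ∧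
        (G.neighborFinset x ∩ G.neighborFinset y).card = 3 := by
    intro x y hx hy hne hxw hyw
    have hxy : ¬ G.Adj x y := fun h => hne (hindep x y hx hy (hshare h))
    refine ⟨hxy, hG.degrees_of_not_adj hne hxy (hdeg5 x hx.1 (hdeg x hx)) (hdeg x hx)
      (hdeg5 y hy.1 (hdeg y hy)) (hdeg y hy) ((Finset.card_le_card ?_).trans hQ)⟩
    exact Finset.union_subset (hleaf hx (hshare hxw)) (hleaf hy (hshare hyw))
  by_cases hX : ∃ x, Leaf x ∧ G.Adj x w
  · obtain ⟨x, hx, hxw⟩ := hX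
    have hxQ := hleaf hx (hshare hxw)
    by_cases hY : ∃ y, Leaf y ∧ G.Adj y w ∧ x ≠ y
    · obtain ⟨y, hy, hyw, hne⟩ := hY
      have hyQ := hleaf hy (hshare hyw)
      obtain ⟨hxy, hx5, hy5, hcap⟩ := hpair hx hy hne hxw hyw
      by_cases hZ : ∃ z, Leaf z ∧ G.Adj z w ∧ x ≠ z ∧ y ≠ z
      · obtain ⟨z, hz, hzw, hxz, hyz⟩ := hZ
        obtain ⟨hxz', -, hz5, hcap'⟩ := hpair hx hz hxz hxw hzw
        obtain ⟨hyz', -, -, hcap''⟩ := hpair hy hz hyz hyw hzw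
        exact hG.false_of_three_leaves hne hxz hyz hxy hxz' hyz' hxw hyw hzw hx5 hy5 hz5 hcap hcap'
          hcap'' ((Finset.card_le_card (Finset.union_subset (Finset.union_subset hxQ hyQ)
            (hleaf hz (hshare hzw)))).trans hQ)
      · refine hG.false_of_two_leaves hne hxy hxw hyw hx5 hy5 hcap fun v hv => ?_
        rcases hwN v hv with h | h
        · have hcard := Finset.card_union_add_card_inter (G.neighborFinset x) (G.neighborFinset y)
          simp only [card_neighborFinset_eq_degree] at hcard
          rw [← Finset.eq_of_subset_of_card_le (Finset.union_subset hxQ hyQ) (by omega)] at h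
          simpa using Or.inr (Or.inr h)
        · by_contra! hv'
          exact hZ ⟨v, h, hv.symm, hv'.1.symm, hv'.2.1.symm⟩
    · have hsub : G.neighborFinset x ∪ G.neighborFinset w ⊆ insert x Q := by
        refine Finset.union_subset (hxQ.trans (Finset.subset_insert x Q)) fun u hu => ?_
        rw [mem_neighborFinset] at hu
        rw [Finset.mem_insert]
        rcases hwN u hu with h | h
        · exact Or.inr h
        · by_contra! hu'
          exact hY ⟨u, h, hu.symm, hu'.1.symm⟩
      refine hG.false_of_adj hxw (hdeg x hx) ((Finset.card_le_card hsub).trans ?_)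
      exact (Finset.card_insert_le x Q).trans (by omega)
  · obtain ⟨x, hx, hxw⟩ : ∃ x, Leaf x ∧ Share x w := by
      by_contra! hno
      refine hwL ⟨hwU, t, hwt, fun u hu huw => ht u (Finset.mem_filter.2 ⟨hu, fun h => ?_⟩) huw⟩
      exact hno u h huw
    have hne : x ≠ w := by
      rintro rfl
      exact hwL hx
    have hadj : ¬ G.Adj x w := fun h => hX ⟨x, hx, h⟩
    have hwsub : G.neighborFinset w ⊆ Q.erase w := by
      intro u hu
      rw [mem_neighborFinset] at hu
      exact Finset.mem_erase.2 ⟨hu.ne', (hwN u hu).resolve_right fun h => hX ⟨u, h, hu.symm⟩⟩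
    have hxsub : G.neighborFinset x ⊆ Q.erase w := by
      refine fun u hu => Finset.mem_erase.2 ⟨?_, hleaf hx hxw hu⟩
      rintro rfl
      exact hadj ((mem_neighborFinset G x u).1 hu)
    have hcard : (Q.erase w).card ≤ 6 := by
      rw [Finset.card_erase_of_mem hwQ]
      omega
    refine hunion hx.1 hwU hne hadj (hdeg x hx) ?_
      ((Finset.card_le_card (Finset.union_subset hxsub hwsub)).trans hcard)
    rw [← card_neighborFinset_eq_degree]
    exact (Finset.card_le_card hwsub).trans hcard

/-- A tree decomposition is also one of every subgraph. -/
def ofLE {G H : SimpleGraph V} {α : Type} (D : TreeDecomp H α) (h : G ≤ H) : TreeDecomp G α :=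
  { D with edge_mem := fun _ _ huv => D.edge_mem (h huv) }

theorem hasBound_of_treeDecomp [Finite V] {α : Type} (D : TreeDecomp G α)
    (hD : ∀ t, (D.bag t).card ≤ 7) : HasBound G := by
  induction G using WellFoundedLT.induction with
  | _ G ih =>
    by_contra hG
    have := Fintype.ofFinite V
    exact IsMinCounterexample.false_of_treeDecomp ⟨hG, fun G' hlt => ih G' hlt (ofLE D hlt.le) hD⟩
      D hD

theorem HasBound.tau_le [Finite V] (hG : HasBound G) : tau G ≤ 2 * nu G := by
  have := Fintype.ofFinite V
  obtain ⟨X, Y, hX, hY, hXY⟩ := hG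
  have h1 : tau G ≤ X.card := Nat.sInf_le ⟨X, hX, rfl⟩
  have h2 : Y.card ≤ nu G := by
    refine le_csSup ⟨Fintype.card (Finset V), ?_⟩ ⟨Y, hY, rfl⟩
    rintro n ⟨Z, -, rfl⟩
    exact Z.card_le_univ
  omega

theorem hasDecompOfWidthLE_of_treewidth_le [Finite V] {k : ℕ} (h : treewidth G ≤ k) :
    HasDecompOfWidthLE G k := by
  have := Fintype.ofFinite V
  have hne : {k | HasDecompOfWidthLE G k}.Nonempty := by
    refine ⟨Fintype.card V, Unit, ⟨⊥, ?_, fun _ => Finset.univ, ?_, ?_, fun v => ?_⟩, fun _ => ?_⟩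
    · exact IsTree.of_subsingleton
    · simp
    · simp
    · have : Nonempty {t : Unit | v ∈ (Finset.univ : Finset V)} := ⟨⟨(), by simp⟩⟩
      exact Connected.of_subsingleton
    · exact (Finset.card_le_univ _).trans (Nat.le_succ _)
  obtain ⟨α, D, hD⟩ := Nat.sInf_mem hne
  exact ⟨α, D, fun t => (hD t).trans (Nat.succ_le_succ h)⟩

end Main

end Tuza

/-- Tuza's conjecture holds for graphs of treewidth at most `6`. -/
theorem tuza_of_treewidth_le_six (V : Type) [Fintype V] (G : SimpleGraph V)
    (htw : treewidth G ≤ 6) : tau G ≤ 2 * nu G := by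
  obtain ⟨α, D, hD⟩ := Tuza.hasDecompOfWidthLE_of_treewidth_le htw
  exact (Tuza.hasBound_of_treeDecomp D hD).tau_le
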